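/- arXiv:2306.10922 — 2 statements merged into one kernel-verified Lean document; each statement's English description precedes it below -/
import Mathlib

section
/- Let B^H = {B^H(t), t ∈ [0,1]} be a d-dimensional fractional Brownian motion of Hurst index H ∈ (0,1) and let I = [a,b] with 0 < a < b ≤ 1. Then there exist a function f : I → ℝ^d that is (H−τ)-Hölder continuous for every τ ∈ (0,H) but not H-Hölder continuous, and compact sets E ⊆ I and F ⊆ ℝ^d, such that C^{d}_{ρ_{d_H}}(E × F) = ℋ^{d}_{ρ_{d_H}}(E × F) = 0 while ℙ{(B^H + f)(E) ∩ F ≠ ∅} > 0. In particular the two-sided hitting estimate c^{−1} C^{d}_{ρ_{d_H}}(E×F) ≤ ℙ{(B^H+f)(E)∩F≠∅} ≤ c ℋ^{d}_{ρ_{d_H}}(E×F) fails for such a drift f. -/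
open MeasureTheory Set ENNReal

/-- The `β`-dimensional Hausdorff measure of `G` with respect to the distance
function `ρ`, defined via countable coverings by `ρ`-balls of radii at most `δ`,
letting `δ → 0` (i.e. taking the supremum over `δ > 0`). -/
noncomputable def hMeasure {X : Type*} (ρ : X → X → ℝ) (β : ℝ) (G : Set X) : ℝ≥0∞ :=
  ⨆ (δ : ℝ) (_ : 0 < δ), ⨅ (c : ℕ → X) (r : ℕ → ℝ)
    (_ : ∀ n, 0 < r n ∧ r n ≤ δ) (_ : G ⊆ ⋃ n, {y | ρ y (c n) < r n}),
    ∑' n, ENNReal.ofReal ((2 * r n) ^ β)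

/-- The radial kernel `φ_α` : `r^{-α}` for `α > 0`, `log(e / (r ⊓ 1))` for `α = 0`,
and `1` for `α < 0`. -/
noncomputable def radialKernel (α : ℝ) (r : ℝ) : ℝ≥0∞ :=
  if 0 < α then ENNReal.ofReal r ^ (-α)
  else if α = 0 then ENNReal.ofReal (Real.log (Real.exp 1 / min r 1))
  else 1

/-- The `φ_α`-energy of a measure `μ` with respect to the distance function `ρ`. -/
noncomputable def energy {X : Type*} [MeasurableSpace X] (ρ : X → X → ℝ) (α : ℝ)
    (μ : MeasureTheory.Measure X) : ℝ≥0∞ :=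
  ∫⁻ u, ∫⁻ v, radialKernel α (ρ u v) ∂μ ∂μ

/-- The Bessel–Riesz capacity of order `α` of `G` with respect to the distance
function `ρ`: the reciprocal of the infimum of `φ_α`-energies over probability
measures carried by `G` (equal to `0` if every such energy is infinite). -/
noncomputable def capacity {X : Type*} [MeasurableSpace X] (ρ : X → X → ℝ) (α : ℝ)
    (G : Set X) : ℝ≥0∞ :=
  (⨅ (μ : MeasureTheory.Measure X) (_ : MeasureTheory.IsProbabilityMeasure μ)
    (_ : μ Gᶜ = 0), energy ρ α μ)⁻¹

/-- Covariance function of fractional Brownian motion of Hurst index `H`. -/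
noncomputable def fbmCov (H s t : ℝ) : ℝ :=
  (|s| ^ (2 * H) + |t| ^ (2 * H) - |t - s| ^ (2 * H)) / 2

/-- `B` is a `d`-dimensional fractional Brownian motion of Hurst index `H` on `[0,1]`
under the probability measure `ℙ`: its coordinates are independent copies of a
real-valued centered Gaussian process with continuous sample paths, starting at `0`,
whose covariance is `fbmCov H`. -/
structure IsFBM {Ω : Type*} [MeasurableSpace Ω] (ℙ : MeasureTheory.Measure Ω)
    (H : ℝ) (d : ℕ) (B : Ω → ℝ → EuclideanSpace ℝ (Fin d)) : Prop where
  meas : ∀ t : ℝ, Measurable fun ω => B ω t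
  cont : ∀ ω, ContinuousOn (fun t => B ω t) (Set.Icc 0 1)
  start : ∀ ω, B ω 0 = 0
  indep : ProbabilityTheory.iIndepFun
      (fun (i : Fin d) (ω : Ω) => fun t : ℝ => B ω t i) ℙ
  gaussian : ∀ i : Fin d, ∀ (n : ℕ) (t : Fin n → ℝ) (a : Fin n → ℝ),
      (∀ j, t j ∈ Set.Icc (0 : ℝ) 1) →
      ∃ v : NNReal, (v : ℝ) = ∑ j, ∑ k, a j * a k * fbmCov H (t j) (t k) ∧
        MeasureTheory.Measure.map (fun ω => ∑ j, a j * B ω (t j) i) ℙ =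
          ProbabilityTheory.gaussianReal 0 v

/-- The parabolic metric `ρ_{d_H}((s,x),(t,y)) = max(|t-s|^H, ‖x-y‖)` on `ℝ × ℝ^d`. -/
noncomputable def parabolicDist (H : ℝ) {d : ℕ}
    (p q : ℝ × EuclideanSpace ℝ (Fin d)) : ℝ :=
  max (|p.1 - q.1| ^ H) (dist p.2 q.2)

/-- `f` is `γ`-Hölder continuous on `s`. -/
def HolderWithExp {E : Type*} [NormedAddCommGroup E] (f : ℝ → E) (γ : ℝ) (s : Set ℝ) : Prop :=
  ∃ K : ℝ, ∀ x ∈ s, ∀ y ∈ s, ‖f x - f y‖ ≤ K * |x - y| ^ γ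

/-!
Let `B` be a coordinate of the process and let `T = a + S`, where `S = dyadicJump c` is a step
function that jumps at every dyadic point of level `k` by at least `c k ≈ (2⁻ᵏ (k + 1)⁻³)^(1/H)`.
The drift is the inverse of the time change `T`, placed in one coordinate. Since `2ᵏ (c k)^H`
tends to `0`, but only polynomially in `k`, the drift just fails to be `H`-Hölder, while every
smaller exponent is allowed. The time set is `E = T(K)` for a Cantor set `K` of positive length
that keeps a distance of order `2⁻ᵏ (k + 1)⁻²` from the dyadic points of level `k`.

The `2ᵏ` increments of `B ∘ T` at level `k` have standard deviation of order `2⁻ᵏ (k + 1)⁻³`. The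
extra factor `(k + 1)⁻¹` pays for a union bound, so with positive probability chaining makes
`B ∘ T` a `1 / 2`-Lipschitz function on `K`. Then `x ↦ x + B (T x)`, which is the drifted path at
time `T x`, contracts distances on `K` by a factor at most `2`, and its image has positive length.
By Fubini some level `z` is attained on `K` with positive probability, so that the drifted process
hits a bounded piece `F` of the hyperplane at height `z`.

On the other hand `E` is covered by `2ᵏ` sets whose diameter to the power `H` is `o(2⁻ᵏ)`, and `F`
has dimension `d - 1`, so `E × F` is null for the `d`-dimensional Hausdorff measure. A measure of
finite energy does not charge such a set: its potential is finite almost everywhere, and around a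
point where the potential is at most `N`, a ball of radius `r` has mass at most `N * r ^ d`.
-/

section DyadicIndex

/-- The index `j` of the level-`k` dyadic interval `[j / 2 ^ k, (j + 1) / 2 ^ k)` containing
`x ≥ 0`; it is `0` for `x < 0`. -/
noncomputable def dyadicIndex (k : ℕ) (x : ℝ) : ℕ := ⌊2 ^ k * x⌋₊

lemma dyadicIndex_mono (k : ℕ) : Monotone (dyadicIndex k) := fun _ _ h ↦
  Nat.floor_mono (by gcongr)

lemma dyadicIndex_add_div (k i : ℕ) (x : ℝ) :
    dyadicIndex (k + i) x / 2 ^ i = dyadicIndex k x := by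
  rw [dyadicIndex, ← Nat.floor_div_natCast, dyadicIndex]
  congr 1
  push_cast
  rw [pow_add, mul_right_comm, mul_div_cancel_right₀ _ (by positivity)]

lemma two_pow_mul_dyadicIndex_le (k i : ℕ) (x : ℝ) :
    2 ^ i * dyadicIndex k x ≤ dyadicIndex (k + i) x :=
  dyadicIndex_add_div k i x ▸ Nat.mul_div_le _ _

lemma dyadicIndex_add_lt (k i : ℕ) (x : ℝ) :
    dyadicIndex (k + i) x < 2 ^ i * (dyadicIndex k x + 1) := by
  have := Nat.lt_mul_div_succ (dyadicIndex (k + i) x) (Nat.two_pow_pos i)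
  rwa [dyadicIndex_add_div] at this

lemma dyadicIndex_eq_of_le {k m : ℕ} {x y : ℝ} (hmk : m ≤ k)
    (h : dyadicIndex k x = dyadicIndex k y) : dyadicIndex m x = dyadicIndex m y := by
  obtain ⟨i, rfl⟩ := Nat.exists_eq_add_of_le hmk
  rw [← dyadicIndex_add_div m i, h, dyadicIndex_add_div]

lemma dyadicIndex_lt_two_pow {k : ℕ} {x : ℝ} (hx : x ∈ Ico (0 : ℝ) 1) :
    dyadicIndex k x < 2 ^ k := by
  rw [dyadicIndex, Nat.floor_lt (mul_nonneg (by positivity) hx.1)]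
  push_cast
  nlinarith [hx.2, show (0 : ℝ) < 2 ^ k by positivity]

lemma dyadicIndex_zero_eq_zero {x : ℝ} (hx : x < 1) : dyadicIndex 0 x = 0 := by
  simpa [dyadicIndex, Nat.floor_eq_zero] using hx

lemma dyadicIndex_lt_of_add_le {k : ℕ} {x y : ℝ} (hx : 0 ≤ x) (hxy : x + (1 / 2) ^ k ≤ y) :
    dyadicIndex k x < dyadicIndex k y := by
  have hfloor : (dyadicIndex k x : ℝ) ≤ 2 ^ k * x := Nat.floor_le (by positivity)
  have hpow : (2 : ℝ) ^ k * (1 / 2) ^ k = 1 := by rw [← mul_pow]; norm_num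
  have hscaled : (2 : ℝ) ^ k * (x + (1 / 2) ^ k) ≤ 2 ^ k * y := by gcongr
  rw [← Nat.add_one_le_iff]
  apply Nat.le_floor
  push_cast
  linarith

lemma exists_dyadicIndex_lt {x y : ℝ} (hx : 0 ≤ x) (hxy : x < y) :
    ∃ k, dyadicIndex k x < dyadicIndex k y := by
  obtain ⟨k, hk⟩ := exists_pow_lt_of_lt_one (sub_pos.2 hxy) one_half_lt_one
  exact ⟨k, dyadicIndex_lt_of_add_le hx (by linarith)⟩

/-- The left endpoint of the level-`k` dyadic interval containing `x`. -/
noncomputable def dyadicFloor (k : ℕ) (x : ℝ) : ℝ := dyadicIndex k x / 2 ^ k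

variable {x : ℝ}

lemma dyadicFloor_le (hx : 0 ≤ x) (k : ℕ) : dyadicFloor k x ≤ x := by
  rw [dyadicFloor, div_le_iff₀' (by positivity)]
  exact Nat.floor_le (by positivity)

lemma dyadicFloor_mem_Ico (hx : x ∈ Ico (0 : ℝ) 1) (k : ℕ) : dyadicFloor k x ∈ Ico (0 : ℝ) 1 :=
  ⟨by unfold dyadicFloor; positivity, (dyadicFloor_le hx.1 k).trans_lt hx.2⟩

lemma div_two_pow_mem_Ico {k j : ℕ} (hj : j < 2 ^ k) : (j / 2 ^ k : ℝ) ∈ Ico (0 : ℝ) 1 :=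
  ⟨by positivity, (div_lt_one (by positivity)).2 (mod_cast hj)⟩

lemma dyadicIndex_div_two_pow {k j : ℕ} : dyadicIndex k (j / 2 ^ k) = j := by
  rw [dyadicIndex, mul_div_cancel₀ _ (by positivity), Nat.floor_natCast]

end DyadicIndex

section DyadicJump

/-- A positive sequence that shrinks by a factor at most `ρ < 1 / 2` at every step: the jump sizes
for which the `2 ^ k` jumps of level `k` have a geometrically decaying total. -/
structure GeometricDecay (c : ℕ → ℝ) (ρ : ℝ) : Prop where
  pos : ∀ k, 0 < c k
  ratio_lt : ρ < 1 / 2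
  succ_le : ∀ k, c (k + 1) ≤ ρ * c k

/-- The increasing step function that jumps at every dyadic point of level `k` by at least `c k`. -/
noncomputable def dyadicJump (c : ℕ → ℝ) (x : ℝ) : ℝ := ∑' k, c k * dyadicIndex k x

variable {c : ℕ → ℝ} {ρ x y : ℝ}

@[simp] lemma dyadicJump_zero : dyadicJump c 0 = 0 := by simp [dyadicJump, dyadicIndex]

namespace GeometricDecay

variable (hc : GeometricDecay c ρ)
include hc

lemma ratio_pos : 0 < ρ :=
  pos_of_mul_pos_left ((hc.pos 1).trans_le (hc.succ_le 0)) (hc.pos 0).le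

lemma apply_add_le (k i : ℕ) : c (k + i) ≤ ρ ^ i * c k := by
  induction i with
  | zero => simp
  | succ i ih =>
    calc c (k + i + 1) ≤ ρ * c (k + i) := hc.succ_le _
      _ ≤ ρ * (ρ ^ i * c k) := mul_le_mul_of_nonneg_left ih hc.ratio_pos.le
      _ = ρ ^ (i + 1) * c k := by ring

lemma hasSum_two_mul_pow : HasSum (fun i : ℕ ↦ (2 * ρ) ^ i) (1 - 2 * ρ)⁻¹ :=
  hasSum_geometric_of_lt_one (by linarith [hc.ratio_pos]) (by linarith [hc.ratio_lt])

lemma summable_dyadicJump (x : ℝ) : Summable fun k ↦ c k * dyadicIndex k x := by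
  refine Summable.of_nonneg_of_le (fun k ↦ mul_nonneg (hc.pos k).le (by positivity)) (fun k ↦ ?_)
    (hc.hasSum_two_mul_pow.summable.mul_right (c 0 * (dyadicIndex 0 x + 1)))
  have hindex : (dyadicIndex k x : ℝ) ≤ 2 ^ k * (dyadicIndex 0 x + 1) := by
    exact_mod_cast (by simpa using (dyadicIndex_add_lt 0 k x).le)
  have hdecay : c k ≤ ρ ^ k * c 0 := by simpa using hc.apply_add_le 0 k
  calc c k * dyadicIndex k x ≤ (ρ ^ k * c 0) * (2 ^ k * (dyadicIndex 0 x + 1)) :=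
        mul_le_mul hdecay hindex (by positivity) ((hc.pos k).le.trans hdecay)
    _ = (2 * ρ) ^ k * (c 0 * (dyadicIndex 0 x + 1)) := by rw [mul_pow]; ring

lemma monotone_dyadicJump : Monotone (dyadicJump c) := fun x y hxy ↦
  (hc.summable_dyadicJump x).tsum_le_tsum (fun k ↦ mul_le_mul_of_nonneg_left
    (Nat.cast_le.2 (dyadicIndex_mono k hxy)) (hc.pos k).le) (hc.summable_dyadicJump y)

lemma dyadicJump_add_le {k : ℕ} (hk : dyadicIndex k x < dyadicIndex k y) :
    dyadicJump c x + c k ≤ dyadicJump c y := by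
  have hxy : x ≤ y := ((dyadicIndex_mono k).reflect_lt hk).le
  have hsum := (hc.summable_dyadicJump y).hasSum.sub (hc.summable_dyadicJump x).hasSum
  have hterm := le_hasSum hsum k fun m _ ↦ sub_nonneg.2 <| mul_le_mul_of_nonneg_left
    (Nat.cast_le.2 (dyadicIndex_mono m hxy)) (hc.pos m).le
  have hindex : (dyadicIndex k x : ℝ) + 1 ≤ dyadicIndex k y := by exact_mod_cast hk
  have hjump := mul_le_mul_of_nonneg_left hindex (hc.pos k).le
  change _ ≤ dyadicJump c y - dyadicJump c x at hterm
  linarith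

lemma dyadicJump_lt (hx : 0 ≤ x) (hxy : x < y) : dyadicJump c x < dyadicJump c y := by
  obtain ⟨k, hk⟩ := exists_dyadicIndex_lt hx hxy
  linarith [hc.dyadicJump_add_le hk, hc.pos k]

lemma dyadicJump_le_add (k : ℕ) (hk : dyadicIndex k x = dyadicIndex k y) :
    dyadicJump c x ≤ dyadicJump c y + (1 - 2 * ρ)⁻¹ * c k := by
  have hsum := (hc.summable_dyadicJump x).hasSum.sub (hc.summable_dyadicJump y).hasSum
  have htail := (hasSum_nat_add_iff' k).2 hsum
  rw [Finset.sum_eq_zero fun m hm ↦ by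
    rw [dyadicIndex_eq_of_le (Finset.mem_range.1 hm).le hk, sub_self], sub_zero] at htail
  have hterm (i : ℕ) : c (i + k) * dyadicIndex (i + k) x - c (i + k) * dyadicIndex (i + k) y
      ≤ (2 * ρ) ^ i * c k := by
    have hindex : (dyadicIndex (k + i) x : ℝ) ≤ dyadicIndex (k + i) y + 2 ^ i := by
      have hlt := dyadicIndex_add_lt k i x
      have hle := two_pow_mul_dyadicIndex_le k i y
      rw [hk, mul_add, mul_one] at hlt
      exact_mod_cast hlt.le.trans (by lia)
    rw [add_comm i k, ← mul_sub]
    calc c (k + i) * ((dyadicIndex (k + i) x : ℝ) - dyadicIndex (k + i) y)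
        ≤ c (k + i) * 2 ^ i := mul_le_mul_of_nonneg_left (by linarith) (hc.pos _).le
      _ ≤ (ρ ^ i * c k) * 2 ^ i := by gcongr; exact hc.apply_add_le k i
      _ = (2 * ρ) ^ i * c k := by rw [mul_pow]; ring
  have hle := hasSum_le hterm htail (hc.hasSum_two_mul_pow.mul_right (c k))
  change dyadicJump c x - dyadicJump c y ≤ _ at hle
  linarith

lemma abs_dyadicJump_sub_le (k : ℕ) (hk : dyadicIndex k x = dyadicIndex k y) :
    |dyadicJump c x - dyadicJump c y| ≤ (1 - 2 * ρ)⁻¹ * c k :=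
  abs_sub_le_iff.2 ⟨by linarith [hc.dyadicJump_le_add k hk],
    by linarith [hc.dyadicJump_le_add k hk.symm]⟩

lemma dyadicJump_mem_Icc (hx : x ∈ Ico (0 : ℝ) 1) :
    dyadicJump c x ∈ Icc 0 ((1 - 2 * ρ)⁻¹ * c 0) := by
  refine ⟨by simpa using hc.monotone_dyadicJump hx.1, ?_⟩
  simpa using hc.dyadicJump_le_add 0 (y := 0)
    (by rw [dyadicIndex_zero_eq_zero hx.2, dyadicIndex_zero_eq_zero one_pos])

lemma add_dyadicJump_mem_Icc {a b : ℝ} (hcb : (1 - 2 * ρ)⁻¹ * c 0 ≤ b - a)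
    (hx : x ∈ Ico (0 : ℝ) 1) : a + dyadicJump c x ∈ Icc a b := by
  have ⟨hnonneg, hle⟩ := hc.dyadicJump_mem_Icc hx
  exact ⟨by linarith, by linarith⟩

end GeometricDecay

/-- The generalized inverse of `dyadicJump c` on `[0, 1]`. -/
noncomputable def dyadicInv (c : ℕ → ℝ) (t : ℝ) : ℝ := sSup {x ∈ Icc (0 : ℝ) 1 | dyadicJump c x ≤ t}

lemma bddAbove_dyadicJump_le (c : ℕ → ℝ) (t : ℝ) :
    BddAbove {x ∈ Icc (0 : ℝ) 1 | dyadicJump c x ≤ t} :=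
  ⟨1, fun _ hx ↦ hx.1.2⟩

lemma zero_mem_dyadicJump_le {t : ℝ} (ht : 0 ≤ t) :
    (0 : ℝ) ∈ {x ∈ Icc (0 : ℝ) 1 | dyadicJump c x ≤ t} := by
  simpa using ht

lemma dyadicInv_mem_Icc {t : ℝ} (ht : 0 ≤ t) : dyadicInv c t ∈ Icc (0 : ℝ) 1 :=
  ⟨le_csSup (bddAbove_dyadicJump_le c t) (zero_mem_dyadicJump_le ht),
    csSup_le ⟨0, zero_mem_dyadicJump_le ht⟩ fun _ hx ↦ hx.1.2⟩

lemma dyadicInv_mono {s t : ℝ} (hs : 0 ≤ s) (hst : s ≤ t) : dyadicInv c s ≤ dyadicInv c t :=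
  csSup_le_csSup (bddAbove_dyadicJump_le c t) ⟨0, zero_mem_dyadicJump_le hs⟩
    fun _ hx ↦ ⟨hx.1, hx.2.trans hst⟩

namespace GeometricDecay

variable (hc : GeometricDecay c ρ)
include hc

lemma dyadicInv_dyadicJump (hx : x ∈ Icc (0 : ℝ) 1) : dyadicInv c (dyadicJump c x) = x := by
  refine csSup_eq_of_is_forall_le_of_forall_le_imp_ge ⟨x, hx, le_rfl⟩ ?_
    fun b hb ↦ hb x ⟨hx, le_rfl⟩
  rintro y ⟨-, hyx⟩
  by_contra! hxy
  exact (hc.dyadicJump_lt hx.1 hxy).not_ge hyx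

lemma dyadicInv_sub_le {s t : ℝ} (hs : 0 ≤ s) (hst : s ≤ t) {k : ℕ} (hk : t - s < c k) :
    dyadicInv c t - dyadicInv c s ≤ (1 / 2) ^ k := by
  by_contra! hlt
  obtain ⟨y, ⟨hy, hyt⟩, hlt_y⟩ := exists_lt_of_lt_csSup ⟨0, zero_mem_dyadicJump_le (hs.trans hst)⟩
    (lt_sub_iff_add_lt'.1 hlt)
  have hpow : (0 : ℝ) < (1 / 2) ^ k := by positivity
  have hinv := (dyadicInv_mem_Icc (c := c) hs).1
  have hz : y - (1 / 2) ^ k ∈ Icc (0 : ℝ) 1 := ⟨by linarith, by linarith [hy.2]⟩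
  have hs_lt : s < dyadicJump c (y - (1 / 2) ^ k) := by
    by_contra! hle
    linarith [le_csSup (bddAbove_dyadicJump_le c s) ⟨hz, hle⟩, dyadicInv.eq_def c s]
  linarith [hc.dyadicJump_add_le (dyadicIndex_lt_of_add_le hz.1 (sub_add_cancel y _).le)]

end GeometricDecay

end DyadicJump

section Holder

variable {E : Type*} [NormedAddCommGroup E] {γ : ℝ} {s t : Set ℝ}

lemma HolderWithExp.mono {f : ℝ → E} (hf : HolderWithExp f γ t) (hst : s ⊆ t) :
    HolderWithExp f γ s :=
  let ⟨K, hK⟩ := hf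
  ⟨K, fun x hx y hy ↦ hK x (hst hx) y (hst hy)⟩

lemma holderWithExp_single_sub_iff {ι : Type*} [Fintype ι] [DecidableEq ι] (i : ι) (g : ℝ → ℝ)
    (a b : ℝ) : HolderWithExp (fun t ↦ EuclideanSpace.single i (g (t - a))) γ (Icc a b) ↔
      HolderWithExp g γ (Icc 0 (b - a)) := by
  have hnorm (x y : ℝ) :
      ‖EuclideanSpace.single i (g (x - a)) - EuclideanSpace.single i (g (y - a))‖ =
        ‖g (x - a) - g (y - a)‖ := by
    rw [← dist_eq_norm, ← dist_eq_norm, PiLp.dist_single_same]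
  refine exists_congr fun K ↦ ⟨fun h x hx y hy ↦ ?_, fun h x hx y hy ↦ ?_⟩
  · have hxy := h (x + a) ⟨by linarith [hx.1], by linarith [hx.2]⟩
      (y + a) ⟨by linarith [hy.1], by linarith [hy.2]⟩
    rwa [hnorm, add_sub_cancel_right, add_sub_cancel_right, add_sub_add_right_eq_sub] at hxy
  · have hxy := h (x - a) ⟨by linarith [hx.1], by linarith [hx.2]⟩
      (y - a) ⟨by linarith [hy.1], by linarith [hy.2]⟩
    rwa [hnorm, ← sub_sub_sub_cancel_right x y a]

namespace GeometricDecay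

variable {c : ℕ → ℝ} {ρ Q : ℝ} (hc : GeometricDecay c ρ)
include hc

lemma tendsto_zero : Filter.Tendsto c Filter.atTop (nhds 0) := by
  have hpow := (tendsto_pow_atTop_nhds_zero_of_lt_one hc.ratio_pos.le
    (hc.ratio_lt.trans one_half_lt_one)).mul_const (c 0)
  rw [zero_mul] at hpow
  exact squeeze_zero (fun k ↦ (hc.pos k).le) (fun k ↦ by simpa using hc.apply_add_le 0 k) hpow

lemma exists_le {δ : ℝ} (hδ : 0 < δ) : ∃ k, c k ≤ δ :=
  (hc.tendsto_zero.eventually_le_const hδ).exists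

lemma holderWithExp_dyadicInv (hγ : 0 < γ) (hQ : ∀ k, (1 / 2) ^ k ≤ Q * c k ^ γ) :
    HolderWithExp (dyadicInv c) γ (Ici 0) := by
  refine ⟨2 * Q, fun s hs t ht ↦ ?_⟩
  wlog hst : t < s generalizing s t
  · rcases (not_lt.1 hst).eq_or_lt with rfl | h
    · simp [Real.zero_rpow hγ.ne']
    · rw [norm_sub_rev, abs_sub_comm]
      exact this t ht s hs h
  have hex := hc.exists_le (sub_pos.2 hst)
  set k := Nat.find hex
  have hck : c k ≤ s - t := Nat.find_spec hex
  have hinv : dyadicInv c s - dyadicInv c t ≤ 2 * (1 / 2) ^ k := by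
    cases hm : k with
    | zero => linarith [(dyadicInv_mem_Icc (c := c) hs).2, (dyadicInv_mem_Icc (c := c) ht).1]
    | succ m =>
      have hlt : s - t < c m := not_le.1 (Nat.find_min hex (by lia))
      linarith [hc.dyadicInv_sub_le ht hst.le hlt, pow_succ (1 / 2 : ℝ) m]
  have hQ0 : 0 ≤ Q := nonneg_of_mul_nonneg_left
    ((pow_nonneg one_half_pos.le 0).trans (hQ 0)) (Real.rpow_pos_of_pos (hc.pos 0) γ)
  rw [Real.norm_of_nonneg (sub_nonneg.2 (dyadicInv_mono ht hst.le)), abs_of_pos (sub_pos.2 hst)]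
  calc dyadicInv c s - dyadicInv c t ≤ 2 * (1 / 2) ^ k := hinv
    _ ≤ 2 * (Q * c k ^ γ) := by gcongr; exact hQ k
    _ ≤ 2 * (Q * (s - t) ^ γ) := by gcongr; exact (hc.pos k).le
    _ = 2 * Q * (s - t) ^ γ := by ring

lemma not_holderWithExp_dyadicInv (hγ : 0 < γ)
    (hlim : Filter.Tendsto (fun k ↦ 2 ^ k * c k ^ γ) Filter.atTop (nhds 0)) :
    ¬ HolderWithExp (dyadicInv c) γ (Icc 0 ((1 - 2 * ρ)⁻¹ * c 0)) := by
  rintro ⟨K, hK⟩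
  set D := (1 - 2 * ρ)⁻¹
  have hD : 0 ≤ D := inv_nonneg.2 (by linarith [hc.ratio_lt])
  have hbound (k : ℕ) : (1 / 2 : ℝ) ≤ |K| * D ^ γ * (2 ^ k * c k ^ γ) := by
    set x : ℝ := (1 / 2) ^ (k + 1) with hx_def
    have hx : x ∈ Ico (0 : ℝ) 1 :=
      ⟨by positivity, pow_lt_one₀ (by norm_num) (by norm_num) k.succ_ne_zero⟩
    have hzero : (0 : ℝ) ∈ Ico (0 : ℝ) 1 := by simp
    have hindex : dyadicIndex k x = dyadicIndex k 0 := by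
      rw [dyadicIndex, hx_def, pow_succ, ← mul_assoc, ← mul_pow]
      norm_num [dyadicIndex]
    have hjump : |dyadicJump c x| ≤ D * c k := by
      simpa using hc.abs_dyadicJump_sub_le k hindex
    have hholder : x ≤ K * |dyadicJump c x| ^ γ := by
      have h := hK _ (hc.dyadicJump_mem_Icc hx) _ (hc.dyadicJump_mem_Icc hzero)
      rw [hc.dyadicInv_dyadicJump ⟨hx.1, hx.2.le⟩, hc.dyadicInv_dyadicJump (by simp), sub_zero,
        dyadicJump_zero, sub_zero] at h
      exact (le_abs_self x).trans h
    have hx_le : x ≤ |K| * (D ^ γ * c k ^ γ) := by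
      rw [← Real.mul_rpow hD (hc.pos k).le]
      refine hholder.trans (mul_le_mul (le_abs_self K) ?_ (by positivity) (abs_nonneg K))
      exact Real.rpow_le_rpow (abs_nonneg _) hjump hγ.le
    calc (1 / 2 : ℝ) = 2 ^ k * x := by rw [hx_def, pow_succ, ← mul_assoc, ← mul_pow]; norm_num
      _ ≤ 2 ^ k * (|K| * (D ^ γ * c k ^ γ)) := by gcongr
      _ = |K| * D ^ γ * (2 ^ k * c k ^ γ) := by ring
  have hle := ge_of_tendsto' (hlim.const_mul (|K| * D ^ γ)) hbound
  norm_num at hle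

end GeometricDecay

end Holder

section FatCantor

/-- The fat Cantor set left over when, for every `k`, the open intervals of radius `r k` around the
dyadic points of level `k` are removed from `[0, 1]`. -/
def fatCantor (r : ℕ → ℝ) : Set ℝ :=
  {x ∈ Icc (0 : ℝ) 1 | ∀ k, ∀ j ∈ Finset.range (2 ^ k + 1), r k ≤ |x - j / 2 ^ k|}

variable {r : ℕ → ℝ} {x y : ℝ}

lemma isCompact_fatCantor (r : ℕ → ℝ) : IsCompact (fatCantor r) := by
  have hinter : fatCantor r = Icc (0 : ℝ) 1 ∩
      ⋂ (k : ℕ), ⋂ j ∈ Finset.range (2 ^ k + 1), {x | r k ≤ |x - j / 2 ^ k|} := by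
    ext x
    simp [fatCantor]
  rw [hinter]
  exact isCompact_Icc.inter_right <| isClosed_iInter fun k ↦ isClosed_biInter fun j _ ↦
    isClosed_le continuous_const (by fun_prop)

lemma volume_fatCantor_pos (hr : ∑' k, (2 ^ k + 1) * ENNReal.ofReal (2 * r k) < 1) :
    0 < volume (fatCantor r) := by
  have hcover : Icc (0 : ℝ) 1 ⊆ fatCantor r ∪
      ⋃ (k : ℕ), ⋃ j ∈ Finset.range (2 ^ k + 1), Metric.ball ((j : ℝ) / 2 ^ k) (r k) := by
    intro x hx
    by_cases hxK : x ∈ fatCantor r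
    · exact .inl hxK
    · simp only [fatCantor, mem_ofPred_eq, not_and, not_forall, not_le] at hxK
      obtain ⟨k, j, hj, hlt⟩ := hxK hx
      exact .inr (mem_iUnion.2 ⟨k, mem_biUnion hj hlt⟩)
  have hgaps : volume (⋃ (k : ℕ), ⋃ j ∈ Finset.range (2 ^ k + 1),
      Metric.ball ((j : ℝ) / 2 ^ k) (r k)) ≤ ∑' k, (2 ^ k + 1) * ENNReal.ofReal (2 * r k) := by
    refine (measure_iUnion_le _).trans (ENNReal.tsum_le_tsum fun k ↦ ?_)
    refine (measure_biUnion_finset_le _ _).trans (le_of_eq ?_)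
    simp only [Real.volume_ball, Finset.sum_const, Finset.card_range, nsmul_eq_mul]
    push_cast
    rfl
  by_contra! hnull
  have hone : (1 : ℝ≥0∞) ≤ 0 + ∑' k, (2 ^ k + 1) * ENNReal.ofReal (2 * r k) := by
    calc (1 : ℝ≥0∞) = volume (Icc (0 : ℝ) 1) := by simp
      _ ≤ _ := (measure_mono hcover).trans (measure_union_le _ _)
      _ ≤ _ := add_le_add hnull hgaps
  rw [zero_add] at hone
  exact hr.not_ge hone

lemma fatCantor_subset_Ico (hr : 0 < r 0) : fatCantor r ⊆ Ico 0 1 := by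
  refine fun x hx ↦ ⟨hx.1.1, lt_of_le_of_ne hx.1.2 fun h ↦ ?_⟩
  have hgap := hx.2 0 1 (by simp)
  simp only [h, Nat.cast_one, pow_zero, div_one, sub_self, abs_zero] at hgap
  linarith

lemma le_abs_sub_of_mem_fatCantor (hx : x ∈ fatCantor r) (hy : y ∈ fatCantor r) {k : ℕ}
    (hk : dyadicIndex k x ≠ dyadicIndex k y) : r k ≤ |x - y| := by
  wlog hlt : dyadicIndex k x < dyadicIndex k y generalizing x y
  · rw [abs_sub_comm]
    exact this hy hx hk.symm (by lia)
  have hindex : dyadicIndex k y ≤ 2 ^ k := by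
    refine (dyadicIndex_mono k hy.1.2).trans (le_of_eq ?_)
    simpa [dyadicIndex] using Nat.floor_natCast (R := ℝ) (2 ^ k)
  have hx_lt : x < dyadicFloor k y := by
    rw [dyadicFloor, lt_div_iff₀' (by positivity)]
    exact (Nat.floor_lt (mul_nonneg (by positivity) hx.1.1)).1 hlt
  have hle_y := dyadicFloor_le hy.1.1 k
  calc r k ≤ |x - dyadicFloor k y| := hx.2 k _ (Finset.mem_range.2 (by lia))
    _ ≤ |x - y| := by
      rw [abs_of_neg (by linarith), abs_of_neg (by linarith)]
      linarith

lemma GeometricDecay.continuousOn_dyadicJump {c : ℕ → ℝ} {ρ : ℝ} (hc : GeometricDecay c ρ)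
    (hr : ∀ k, 0 < r k) : ContinuousOn (dyadicJump c) (fatCantor r) := by
  have hD : 0 < (1 - 2 * ρ)⁻¹ := inv_pos.2 (by linarith [hc.ratio_lt])
  rw [Metric.continuousOn_iff]
  intro x hx ε hε
  obtain ⟨k, hk⟩ := hc.exists_le (δ := ε / 2 / (1 - 2 * ρ)⁻¹) (by positivity)
  refine ⟨r k, hr k, fun y hy hyx ↦ ?_⟩
  have hindex : dyadicIndex k y = dyadicIndex k x := by
    by_contra hne
    exact (le_abs_sub_of_mem_fatCantor hy hx hne).not_gt hyx
  rw [le_div_iff₀' hD] at hk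
  rw [Real.dist_eq]
  linarith [hc.abs_dyadicJump_sub_le k hindex]

end FatCantor

section HausdorffNull

variable {X : Type*} {ρ : X → X → ℝ} {β : ℝ} {G : Set X}

lemma exists_pos_le_tsum_rpow_lt (hβ : 0 < β) {δ : ℝ} (hδ : 0 < δ) {ε : ℝ≥0∞} (hε : ε ≠ 0) :
    ∃ r : ℕ → ℝ, (∀ n, 0 < r n ∧ r n ≤ δ) ∧ ∑' n, ENNReal.ofReal ((2 * r n) ^ β) < ε := by
  obtain ⟨w, hw, hsum⟩ := ENNReal.exists_pos_sum_of_countable hε ℕ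
  have hroot (n : ℕ) : 0 < (w n : ℝ) ^ β⁻¹ / 2 := by have := hw n; positivity
  refine ⟨fun n ↦ min δ ((w n : ℝ) ^ β⁻¹ / 2), fun n ↦ ⟨lt_min hδ (hroot n), min_le_left _ _⟩,
    (ENNReal.tsum_le_tsum fun n ↦ ?_).trans_lt hsum⟩
  rw [← ENNReal.ofReal_coe_nnreal]
  apply ENNReal.ofReal_le_ofReal
  calc (2 * min δ ((w n : ℝ) ^ β⁻¹ / 2)) ^ β ≤ ((w n : ℝ) ^ β⁻¹) ^ β := by
        refine Real.rpow_le_rpow (mul_pos two_pos (lt_min hδ (hroot n))).le ?_ hβ.le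
        linarith [min_le_right δ ((w n : ℝ) ^ β⁻¹ / 2)]
    _ = w n := Real.rpow_inv_rpow (w n).2 hβ.ne'

lemma hMeasure_eq_zero_of_forall_exists_finset [Nonempty X] (hβ : 0 < β)
    (h : ∀ ε > 0, ∃ (s : Finset X) (r : ℝ), 0 < r ∧ r ≤ ε ∧ (∀ y ∈ G, ∃ x ∈ s, ρ y x < r) ∧
      s.card * (2 * r) ^ β ≤ ε) :
    hMeasure ρ β G = 0 := by
  simp only [hMeasure, ENNReal.iSup_eq_zero]
  intro δ hδ
  refine le_antisymm (ENNReal.le_of_forall_pos_le_add fun ε hε _ ↦ ?_) bot_le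
  have hε2 : (0 : ℝ) < ε / 2 := by positivity
  obtain ⟨s, r, hr, hrε, hcover, hcard⟩ := h _ (lt_min hδ hε2)
  obtain ⟨p, hp, hpsum⟩ := exists_pos_le_tsum_rpow_lt hβ hδ (ENNReal.ofReal_pos.2 hε2).ne'
  obtain ⟨e⟩ := nonempty_equiv_of_countable (α := ℕ) (β := s ⊕ ℕ)
  let center : s ⊕ ℕ → X := Sum.elim (↑) fun _ ↦ Classical.arbitrary X
  let radius : s ⊕ ℕ → ℝ := Sum.elim (fun _ ↦ r) p
  have hradius (i : s ⊕ ℕ) : 0 < radius i ∧ radius i ≤ δ := by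
    rcases i with x | n
    exacts [⟨hr, hrε.trans (min_le_left _ _)⟩, hp n]
  refine (iInf₂_le (center ∘ e) (radius ∘ e)).trans
    ((iInf₂_le (fun n ↦ hradius (e n)) fun y hy ↦ ?_).trans ?_)
  · obtain ⟨x, hx, hyx⟩ := hcover y hy
    exact mem_iUnion.2 ⟨e.symm (.inl ⟨x, hx⟩), by simpa [center, radius] using hyx⟩
  · calc ∑' n, ENNReal.ofReal ((2 * radius (e n)) ^ β)
        = ∑' i, ENNReal.ofReal ((2 * radius i) ^ β) :=
          e.tsum_eq fun i ↦ ENNReal.ofReal ((2 * radius i) ^ β)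
      _ = s.card * ENNReal.ofReal ((2 * r) ^ β) + ∑' n, ENNReal.ofReal ((2 * p n) ^ β) := by
        rw [ENNReal.summable.tsum_sum ENNReal.summable]
        simp [radius, nsmul_eq_mul]
      _ ≤ ENNReal.ofReal (ε / 2) + ENNReal.ofReal (ε / 2) := by
        refine add_le_add ?_ hpsum.le
        rw [← ENNReal.ofReal_natCast, ← ENNReal.ofReal_mul (by positivity)]
        exact ENNReal.ofReal_le_ofReal (hcard.trans (min_le_right _ _))
      _ = 0 + ε := by rw [← ENNReal.ofReal_add hε2.le hε2.le, add_halves, zero_add]; simp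

end HausdorffNull

section Capacity

variable {X : Type*} {ρ : X → X → ℝ} {β : ℝ} {G : Set X}

lemma radialKernel_of_pos (hβ : 0 < β) (r : ℝ) : radialKernel β r = ENNReal.ofReal r ^ (-β) :=
  if_pos hβ

lemma measurable_radialKernel (hβ : 0 < β) : Measurable (radialKernel β) := by
  simp only [funext (radialKernel_of_pos hβ)]
  fun_prop

lemma exists_cover_of_hMeasure_eq_zero (hG : hMeasure ρ β G = 0) {ε : ℝ≥0∞} (hε : 0 < ε) :
    ∃ (c : ℕ → X) (r : ℕ → ℝ), (∀ n, 0 < r n) ∧ G ⊆ ⋃ n, {y | ρ y (c n) < r n} ∧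
      ∑' n, ENNReal.ofReal ((2 * r n) ^ β) < ε := by
  simp only [hMeasure, ENNReal.iSup_eq_zero] at hG
  have hlt := (hG 1 one_pos).trans_lt hε
  simp only [iInf_lt_iff] at hlt
  obtain ⟨c, r, hr, hcover, hsum⟩ := hlt
  exact ⟨c, r, fun n ↦ (hr n).1, hcover, hsum⟩

variable [MeasurableSpace X] {μ : Measure X}

/-- The Riesz potential of order `β` of the measure `μ`, whose `μ`-integral is the energy. -/
noncomputable def rieszPotential (ρ : X → X → ℝ) (β : ℝ) (μ : Measure X) (u : X) : ℝ≥0∞ :=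
  ∫⁻ v, radialKernel β (ρ u v) ∂μ

lemma measure_setOf_le_le_rieszPotential_mul (hβ : 0 < β) {u : X} (hρ : Measurable (ρ u)) {r : ℝ}
    (hr : 0 < r) : μ {v | ρ u v ≤ r} ≤ rieszPotential ρ β μ u * ENNReal.ofReal (r ^ β) := by
  have hkernel : {v | ρ u v ≤ r} ⊆ {v | radialKernel β r ≤ radialKernel β (ρ u v)} := fun v hv ↦ by
    simp only [mem_ofPred_eq, radialKernel_of_pos hβ, ENNReal.rpow_neg]
    gcongr
    exact hv
  have hrβ : radialKernel β r = (ENNReal.ofReal (r ^ β))⁻¹ := by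
    rw [radialKernel_of_pos hβ, ENNReal.rpow_neg, ENNReal.ofReal_rpow_of_pos hr]
  have hpos : 0 < r ^ β := by positivity
  calc μ {v | ρ u v ≤ r} ≤ μ {v | radialKernel β r ≤ radialKernel β (ρ u v)} :=
        measure_mono hkernel
    _ ≤ rieszPotential ρ β μ u / radialKernel β r :=
      meas_ge_le_lintegral_div ((measurable_radialKernel hβ).comp hρ).aemeasurable
        (by simp [hrβ]) (by simp [hrβ, hpos])
    _ = rieszPotential ρ β μ u * ENNReal.ofReal (r ^ β) := by rw [hrβ, div_eq_mul_inv, inv_inv]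

lemma measure_inter_rieszPotential_le_eq_zero (hβ : 0 < β) (hρ : ∀ u, Measurable (ρ u))
    (htri : ∀ u v w, ρ u v ≤ ρ u w + ρ v w) (hG : hMeasure ρ β G = 0) (N : ℕ) :
    μ (G ∩ {u | rieszPotential ρ β μ u ≤ N}) = 0 := by
  set A := G ∩ {u | rieszPotential ρ β μ u ≤ N}
  refine le_antisymm (ENNReal.le_of_forall_pos_le_add fun ε hε _ ↦ ?_) bot_le
  obtain ⟨c, r, hr, hcover, hsum⟩ := exists_cover_of_hMeasure_eq_zero hG
    (ENNReal.div_pos (ENNReal.coe_pos.2 hε).ne'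
      (ENNReal.add_ne_top.2 ⟨natCast_ne_top N, one_ne_top⟩))
  have hball (n : ℕ) : μ (A ∩ {y | ρ y (c n) < r n}) ≤ N * ENNReal.ofReal ((2 * r n) ^ β) := by
    rcases (A ∩ {y | ρ y (c n) < r n}).eq_empty_or_nonempty with hempty | ⟨u, hu, hur⟩
    · simp [hempty]
    · have hsub : A ∩ {y | ρ y (c n) < r n} ⊆ {v | ρ u v ≤ 2 * r n} := fun v ⟨_, hv⟩ ↦ by
        simp only [mem_ofPred_eq] at hv hur ⊢
        linarith [htri u v (c n)]
      calc μ (A ∩ {y | ρ y (c n) < r n}) ≤ μ {v | ρ u v ≤ 2 * r n} := measure_mono hsub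
        _ ≤ rieszPotential ρ β μ u * ENNReal.ofReal ((2 * r n) ^ β) :=
          measure_setOf_le_le_rieszPotential_mul hβ (hρ u) (by linarith [hr n])
        _ ≤ N * ENNReal.ofReal ((2 * r n) ^ β) := mul_le_mul_left hu.2 _
  calc μ A ≤ μ (⋃ n, A ∩ {y | ρ y (c n) < r n}) := by
        rw [← inter_iUnion]
        exact measure_mono fun y hy ↦ ⟨hy, hcover hy.1⟩
    _ ≤ ∑' n, N * ENNReal.ofReal ((2 * r n) ^ β) :=
      (measure_iUnion_le _).trans (ENNReal.tsum_le_tsum hball)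
    _ ≤ (N + 1) * (ε / (N + 1)) := by
      rw [ENNReal.tsum_mul_left]
      exact mul_le_mul' le_self_add hsum.le
    _ = 0 + ε := by rw [zero_add, ENNReal.mul_div_cancel (by simp) (by simp)]

lemma capacity_eq_zero_of_hMeasure_eq_zero (hβ : 0 < β) (hρ : Measurable (Function.uncurry ρ))
    (htri : ∀ u v w, ρ u v ≤ ρ u w + ρ v w) (hG : hMeasure ρ β G = 0) : capacity ρ β G = 0 := by
  simp only [capacity, ENNReal.inv_eq_zero, iInf_eq_top]
  intro μ _ hμG
  by_contra hfinite
  have hpotential : Measurable (rieszPotential ρ β μ) :=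
    ((measurable_radialKernel hβ).comp hρ).lintegral_prod_right'
  have hlevel : ∀ᵐ u ∂μ, ∀ N : ℕ, u ∉ G ∩ {u | rieszPotential ρ β μ u ≤ N} :=
    ae_all_iff.2 fun N ↦ measure_eq_zero_iff_ae_notMem.1 <|
      measure_inter_rieszPotential_le_eq_zero hβ (fun _ ↦ hρ.of_uncurry_left) htri hG N
  have hfalse : ∀ᵐ _ ∂μ, False := by
    filter_upwards [ae_lt_top hpotential hfinite, measure_eq_zero_iff_ae_notMem.1 hμG, hlevel]
      with u hu_lt hu_mem hu_notMem
    obtain ⟨N, hN⟩ := ENNReal.exists_nat_gt hu_lt.ne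
    exact hu_notMem N ⟨not_not.1 hu_mem, hN.le⟩
  exact hfalse.exists.elim fun _ h ↦ h

end Capacity

section ParabolicDist

variable {H : ℝ} {d : ℕ}

lemma parabolicDist_triangle (hH : H ∈ Ioo (0 : ℝ) 1) (p q r : ℝ × EuclideanSpace ℝ (Fin d)) :
    parabolicDist H p q ≤ parabolicDist H p r + parabolicDist H q r := by
  refine max_le ?_ ?_
  · calc |p.1 - q.1| ^ H ≤ (|p.1 - r.1| + |q.1 - r.1|) ^ H := by
          refine Real.rpow_le_rpow (abs_nonneg _) ?_ hH.1.le
          rw [abs_sub_comm q.1]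
          exact abs_sub_le _ _ _
      _ ≤ |p.1 - r.1| ^ H + |q.1 - r.1| ^ H :=
        Real.rpow_add_le_add_rpow (abs_nonneg _) (abs_nonneg _) hH.1.le hH.2.le
      _ ≤ _ := add_le_add (le_max_left _ _) (le_max_left _ _)
  · exact (dist_triangle_right _ _ r.2).trans (add_le_add (le_max_right _ _) (le_max_right _ _))

lemma measurable_parabolicDist :
    Measurable (Function.uncurry (parabolicDist H : _ → ℝ × EuclideanSpace ℝ (Fin d) → ℝ)) := by
  unfold Function.uncurry parabolicDist
  exact Measurable.max (by fun_prop) (by fun_prop)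

end ParabolicDist

section Cover

lemma exists_finset_card_le_forall_abs_sub_lt {M s : ℝ} (hM : 0 ≤ M) (hs : 0 < s) :
    ∃ T : Finset ℝ, (T.card : ℝ) ≤ 2 * M / s + 1 ∧ ∀ x, |x| ≤ M → ∃ y ∈ T, |x - y| < s := by
  refine ⟨(Finset.range (⌊2 * M / s⌋₊ + 1)).image fun k : ℕ ↦ -M + k * s, ?_, fun x hx ↦ ?_⟩
  · have hcard := Finset.card_image_le (s := Finset.range (⌊2 * M / s⌋₊ + 1))
      (f := fun k : ℕ ↦ -M + k * s)
    rw [Finset.card_range] at hcard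
    calc _ ≤ ((⌊2 * M / s⌋₊ + 1 : ℕ) : ℝ) := mod_cast hcard
      _ ≤ 2 * M / s + 1 := by
        push_cast
        gcongr
        exact Nat.floor_le (by positivity)
  · obtain ⟨hMx, hxM⟩ := abs_le.1 hx
    have hnonneg : 0 ≤ (x + M) / s := div_nonneg (by linarith) hs.le
    have hfloor_le := Nat.floor_le hnonneg
    have hlt_floor := Nat.lt_floor_add_one ((x + M) / s)
    rw [le_div_iff₀ hs] at hfloor_le
    rw [div_lt_iff₀ hs] at hlt_floor
    refine ⟨_, Finset.mem_image_of_mem _ (Finset.mem_range.2 (Nat.lt_succ_of_le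
      (Nat.floor_le_floor (div_le_div_of_nonneg_right (by linarith : x + M ≤ 2 * M) hs.le)))), ?_⟩
    rw [abs_lt]
    constructor <;> linarith

lemma dist_lt_of_forall_abs_sub_lt {d : ℕ} (hd : 0 < d) {v w : EuclideanSpace ℝ (Fin d)} {r : ℝ}
    (h : ∀ i, |v i - w i| < r / d) : dist v w < r := by
  have : Nonempty (Fin d) := ⟨⟨0, hd⟩⟩
  have hd' : (d : ℝ) ≠ 0 := by positivity
  calc dist v w ≤ ∑ i, dist (v i) (w i) := by
        rw [EuclideanSpace.dist_eq, Real.sqrt_le_iff]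
        exact ⟨by positivity, Finset.sum_sq_le_sq_sum_of_nonneg fun _ _ ↦ dist_nonneg⟩
    _ < ∑ _i : Fin d, r / d :=
        Finset.sum_lt_sum_of_nonempty Finset.univ_nonempty fun i _ ↦ h i
    _ = r := by simp [mul_div_cancel₀ _ hd']

/-- The bounded piece `{v | v i = z, ‖v‖ ≤ M}` of a coordinate hyperplane, used as target set. -/
def coordSlice {d : ℕ} (i : Fin d) (z M : ℝ) : Set (EuclideanSpace ℝ (Fin d)) :=
  {v | v i = z ∧ ‖v‖ ≤ M}

lemma isCompact_coordSlice {d : ℕ} (i : Fin d) (z M : ℝ) : IsCompact (coordSlice i z M) := by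
  have hclosed : IsClosed {v : EuclideanSpace ℝ (Fin d) | v i = z} :=
    isClosed_eq (EuclideanSpace.proj i).continuous continuous_const
  have heq : coordSlice i z M = {v | v i = z} ∩ Metric.closedBall 0 M := by
    ext v
    simp [coordSlice]
  exact heq ▸ (isCompact_closedBall 0 M).inter_left hclosed

lemma exists_finset_cover_coordSlice {d : ℕ} (i : Fin d) (z : ℝ) {M r : ℝ} (hM : 0 ≤ M)
    (hr : 0 < r) (hr1 : r ≤ 1) :
    ∃ s : Finset (EuclideanSpace ℝ (Fin d)), (s.card : ℝ) ≤ ((2 * M * d + 1) / r) ^ (d - 1) ∧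
      ∀ v ∈ coordSlice i z M, ∃ x ∈ s, dist v x < r := by
  have hd : (0 : ℝ) < d := mod_cast i.pos
  obtain ⟨T, hTcard, hT⟩ := exists_finset_card_le_forall_abs_sub_lt hM (div_pos hr hd)
  let grid : Finset (Fin d → ℝ) := Fintype.piFinset (Function.update (fun _ ↦ T) i {z})
  have hgrid : grid.card = T.card ^ (d - 1) := by
    simp only [grid, Fintype.card_piFinset, ← Finset.mul_prod_erase _ _ (Finset.mem_univ i),
      Function.update_self, Finset.card_singleton, one_mul]
    rw [Finset.prod_congr rfl fun j hj ↦ by rw [Function.update_of_ne (Finset.ne_of_mem_erase hj)]]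
    simp
  refine ⟨grid.image (WithLp.toLp 2), ?_, fun v ⟨hvi, hvM⟩ ↦ ?_⟩
  · calc _ ≤ ((T.card ^ (d - 1) : ℕ) : ℝ) := mod_cast Finset.card_image_le.trans hgrid.le
      _ ≤ ((2 * M * d + 1) / r) ^ (d - 1) := by
        push_cast
        gcongr
        refine hTcard.trans ?_
        rw [add_div, div_div_eq_mul_div]
        gcongr
        exact one_le_one_div hr hr1
  · choose y hyT hy using fun j ↦ hT (v j) ((PiLp.norm_apply_le v j).trans hvM)
    refine ⟨WithLp.toLp 2 (Function.update y i z), Finset.mem_image_of_mem _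
      (Fintype.mem_piFinset.2 fun j ↦ ?_), dist_lt_of_forall_abs_sub_lt i.pos fun j ↦ ?_⟩ <;>
    rcases eq_or_ne j i with rfl | hj
    · simp
    · simpa [hj] using hyT j
    · simpa [hvi] using div_pos hr hd
    · simpa [hj] using hy j

lemma hMeasure_prod_coordSlice_eq_zero {H : ℝ} {E : Set ℝ} {d : ℕ} (i : Fin d) (z : ℝ) {M : ℝ}
    (hM : 0 ≤ M)
    (hE : ∀ ε > 0, ∃ (s : Finset ℝ) (r : ℝ), 0 < r ∧ r ≤ ε ∧
      (∀ t ∈ E, ∃ u ∈ s, |t - u| ^ H < r) ∧ s.card * r ≤ ε) :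
    hMeasure (parabolicDist H) d (E ×ˢ coordSlice i z M) = 0 := by
  have hd : (0 : ℝ) < d := mod_cast i.pos
  refine hMeasure_eq_zero_of_forall_exists_finset hd fun ε hε ↦ ?_
  set Q : ℝ := 2 ^ d * (2 * M * d + 1) ^ (d - 1) with hQ
  have hQ_pos : 0 < Q := by positivity
  obtain ⟨s, r, hr, hrε, hs, hcard⟩ := hE (min (min 1 ε) (ε / Q)) (by positivity)
  obtain ⟨hr1, hrε'⟩ := le_min_iff.1 (hrε.trans (min_le_left _ _))
  obtain ⟨s', hcard', hs'⟩ := exists_finset_cover_coordSlice i z hM hr hr1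
  refine ⟨s ×ˢ s', r, hr, hrε', fun p hp ↦ ?_, ?_⟩
  · obtain ⟨u, hu, hpu⟩ := hs p.1 hp.1
    obtain ⟨x, hx, hpx⟩ := hs' p.2 hp.2
    exact ⟨(u, x), Finset.mk_mem_product hu hx, max_lt hpu hpx⟩
  · rw [Finset.card_product, Nat.cast_mul, Real.rpow_natCast]
    calc (s.card : ℝ) * s'.card * (2 * r) ^ d
        ≤ s.card * ((2 * M * d + 1) / r) ^ (d - 1) * (2 * r) ^ d := by gcongr
      _ = Q * (s.card * r) := by
        have hpow : r ^ d = r ^ (d - 1) * r := (pow_sub_one_mul i.pos.ne' r).symm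
        rw [div_pow, mul_pow, hpow, hQ]
        field_simp
      _ ≤ Q * (ε / Q) := by
        gcongr
        exact hcard.trans (min_le_right _ _)
      _ = ε := mul_div_cancel₀ _ hQ_pos.ne'

lemma GeometricDecay.exists_finset_cover_image_dyadicJump {c : ℕ → ℝ} {ρ H : ℝ}
    (hc : GeometricDecay c ρ) (hH : 0 < H)
    (hlim : Filter.Tendsto (fun k ↦ 2 ^ k * c k ^ H) Filter.atTop (nhds 0)) (a : ℝ) {K : Set ℝ}
    (hK : K ⊆ Ico 0 1) {ε : ℝ} (hε : 0 < ε) :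
    ∃ (s : Finset ℝ) (r : ℝ), 0 < r ∧ r ≤ ε ∧
      (∀ t ∈ (fun x ↦ a + dyadicJump c x) '' K, ∃ u ∈ s, |t - u| ^ H < r) ∧ s.card * r ≤ ε := by
  have hD : 0 < (1 - 2 * ρ)⁻¹ := inv_pos.2 (by linarith [hc.ratio_lt])
  have hlim' := hlim.const_mul (2 * ((1 - 2 * ρ)⁻¹) ^ H)
  rw [mul_zero] at hlim'
  obtain ⟨k, hk⟩ := (hlim'.eventually_le_const hε).exists
  have hck := hc.pos k
  set r := 2 * ((1 - 2 * ρ)⁻¹ * c k) ^ H with hr_def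
  have hr : 0 < r := by positivity
  have hcount : 2 ^ k * r ≤ ε := by
    rw [hr_def, Real.mul_rpow hD.le hck.le]
    linarith
  let s := (Finset.range (2 ^ k)).image fun j : ℕ ↦ a + dyadicJump c (j / 2 ^ k)
  have hs : s.card ≤ 2 ^ k := Finset.card_image_le.trans (Finset.card_range _).le
  refine ⟨s, r, hr, (le_mul_of_one_le_left hr.le (one_le_pow₀ one_le_two)).trans hcount, ?_, ?_⟩
  · rintro _ ⟨x, hx, rfl⟩
    refine ⟨_, Finset.mem_image_of_mem _ (Finset.mem_range.2 (dyadicIndex_lt_two_pow (hK hx))), ?_⟩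
    rw [add_sub_add_left_eq_sub]
    calc _ ≤ ((1 - 2 * ρ)⁻¹ * c k) ^ H := Real.rpow_le_rpow (abs_nonneg _)
          (hc.abs_dyadicJump_sub_le k dyadicIndex_div_two_pow.symm) hH.le
      _ < r := by linarith
  · calc (s.card : ℝ) * r ≤ 2 ^ k * r := by gcongr; exact_mod_cast hs
      _ ≤ ε := hcount

end Cover

section Chaining

open Filter Topology

lemma GeometricDecay.tendsto_dyadicJump_dyadicFloor {c : ℕ → ℝ} {ρ : ℝ}
    (hc : GeometricDecay c ρ) (x : ℝ) :
    Tendsto (fun k ↦ dyadicJump c (dyadicFloor k x)) atTop (𝓝 (dyadicJump c x)) := by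
  have hbound := hc.tendsto_zero.const_mul (1 - 2 * ρ)⁻¹
  rw [mul_zero] at hbound
  exact tendsto_iff_dist_tendsto_zero.2 <| squeeze_zero (fun _ ↦ dist_nonneg)
    (fun k ↦ hc.abs_dyadicJump_sub_le k dyadicIndex_div_two_pow) hbound

variable {X : Type*} [PseudoMetricSpace X] {h : ℝ → X} {δ : ℕ → ℝ}

lemma dist_dyadicFloor_le (hδ : ∀ k, δ (k + 1) ≤ δ k / 2)
    (hstep : ∀ k (j : ℕ), j < 2 ^ (k + 1) →
      dist (h (j / 2 ^ (k + 1))) (h (↑(j / 2) / 2 ^ k)) ≤ δ k)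
    {x : ℝ} (hx : x ∈ Ico (0 : ℝ) 1)
    (hlim : Tendsto (fun n ↦ h (dyadicFloor n x)) atTop (𝓝 (h x))) (k : ℕ) :
    dist (h (dyadicFloor k x)) (h x) ≤ 2 * δ k := by
  have hgeom (n : ℕ) : δ (k + n) ≤ δ k * (1 / 2) ^ n := by
    induction n with
    | zero => simp
    | succ n ih =>
      calc δ (k + n + 1) ≤ δ (k + n) / 2 := hδ _
        _ ≤ δ k * (1 / 2) ^ n / 2 := by gcongr
        _ = δ k * (1 / 2) ^ (n + 1) := by ring
  have hdist (n : ℕ) : dist (h (dyadicFloor (k + n) x)) (h (dyadicFloor (k + n + 1) x))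
      ≤ δ k * (1 / 2) ^ n := by
    have hparent : dyadicIndex (k + n + 1) x / 2 = dyadicIndex (k + n) x :=
      dyadicIndex_add_div (k + n) 1 x
    have := hstep (k + n) (dyadicIndex (k + n + 1) x) (dyadicIndex_lt_two_pow hx)
    rw [hparent, dist_comm] at this
    exact this.trans (hgeom n)
  calc dist (h (dyadicFloor k x)) (h x) ≤ δ k / (1 - 1 / 2) :=
        dist_le_of_le_geometric_of_tendsto₀ _ _ (by norm_num) hdist
          (hlim.comp (tendsto_add_atTop_nat k |>.congr fun n ↦ add_comm n k))
    _ = 2 * δ k := by ring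

lemma lipschitzOnWith_fatCantor {r : ℕ → ℝ} (hr : 0 < r 0) (hδ : ∀ k, δ (k + 1) ≤ δ k / 2)
    (hstep : ∀ k (j : ℕ), j < 2 ^ (k + 1) →
      dist (h (j / 2 ^ (k + 1))) (h (↑(j / 2) / 2 ^ k)) ≤ δ k)
    (hlim : ∀ x ∈ fatCantor r, Tendsto (fun n ↦ h (dyadicFloor n x)) atTop (𝓝 (h x)))
    {L : NNReal} (hL : ∀ k, 4 * δ k ≤ L * r (k + 1)) :
    LipschitzOnWith L h (fatCantor r) := by
  refine LipschitzOnWith.of_dist_le_mul fun x hx y hy ↦ ?_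
  rcases eq_or_ne x y with rfl | hxy
  · simp
  have hx' := fatCantor_subset_Ico hr hx
  have hy' := fatCantor_subset_Ico hr hy
  have hex : ∃ k, dyadicIndex k x ≠ dyadicIndex k y := by
    rcases hxy.lt_or_gt with hlt | hlt
    · exact (exists_dyadicIndex_lt hx'.1 hlt).imp fun _ ↦ ne_of_lt
    · exact (exists_dyadicIndex_lt hy'.1 hlt).imp fun _ ↦ ne_of_gt
  -- `k + 1` is the first level separating `x` from `y`.
  obtain ⟨k, hk⟩ : ∃ k, Nat.find hex = k + 1 := by
    refine Nat.exists_eq_succ_of_ne_zero fun hzero ↦ ?_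
    have := hzero ▸ Nat.find_spec hex
    rw [dyadicIndex_zero_eq_zero hx'.2, dyadicIndex_zero_eq_zero hy'.2] at this
    exact this rfl
  have hsep : r (k + 1) ≤ |x - y| := le_abs_sub_of_mem_fatCantor hx hy (hk ▸ Nat.find_spec hex)
  have hfloor : dyadicFloor k x = dyadicFloor k y := by
    have := Nat.find_min hex (m := k) (by lia)
    rw [dyadicFloor, dyadicFloor, not_not.1 this]
  calc dist (h x) (h y)
      ≤ dist (h (dyadicFloor k x)) (h x) + dist (h (dyadicFloor k y)) (h y) := by
        rw [hfloor]
        exact dist_triangle_left _ _ _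
    _ ≤ 2 * δ k + 2 * δ k := add_le_add (dist_dyadicFloor_le hδ hstep hx' (hlim x hx) k)
        (dist_dyadicFloor_le hδ hstep hy' (hlim y hy) k)
    _ = 4 * δ k := by ring
    _ ≤ L * r (k + 1) := hL k
    _ ≤ L * dist x y := by gcongr; exact hsep

end Chaining

section Image

lemma volume_image_add_pos {h : ℝ → ℝ} {K : Set ℝ} {L : NNReal}
    (hh : LipschitzOnWith L h K) (hL : L < 1) (hK : 0 < volume K) :
    0 < volume ((fun x ↦ x + h x) '' K) := by
  have hexp : AntilipschitzWith (1⁻¹ - L)⁻¹ fun x : K ↦ (x : ℝ) + h x :=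
    AntilipschitzWith.subtype_coe K |>.add_lipschitzWith hh.to_restrict (by simpa using hL)
  have hle := hexp.le_hausdorffMeasure_image zero_le_one univ
  rw [← isometry_subtype_coe.hausdorffMeasure_image (Or.inl zero_le_one), image_univ,
    Subtype.range_coe, hausdorffMeasure_real] at hle
  rw [image_eq_range, ← image_univ]
  exact pos_of_mul_pos_right (hK.trans_le hle) zero_le

end Image

section SubGaussian

open ProbabilityTheory

variable {Ω : Type*} [MeasurableSpace Ω] {P : Measure Ω}

lemma hasSubgaussianMGF_mono {Y : Ω → ℝ} {c c' : NNReal} (h : HasSubgaussianMGF Y c P)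
    (hcc' : c ≤ c') : HasSubgaussianMGF Y c' P where
  integrable_exp_mul := h.integrable_exp_mul
  mgf_le t := (h.mgf_le t).trans (by gcongr)

lemma hasSubgaussianMGF_of_map_eq_gaussianReal {Y : Ω → ℝ} {v : NNReal}
    (h : P.map Y = gaussianReal 0 v) : HasSubgaussianMGF Y v P where
  integrable_exp_mul t := by
    have hY : AEMeasurable Y P := aemeasurable_of_map_neZero (by rw [h]; infer_instance)
    have hint := integrable_exp_mul_gaussianReal (μ := 0) (v := v) t
    rw [← h] at hint
    exact hint.comp_aemeasurable hY
  mgf_le t := by rw [mgf_gaussianReal h, zero_mul, zero_add]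

lemma measure_le_abs_le_of_hasSubgaussianMGF {Y : Ω → ℝ} {c : NNReal} [IsFiniteMeasure P]
    (h : HasSubgaussianMGF Y c P) {ε : ℝ} (hε : 0 ≤ ε) :
    P {ω | ε ≤ |Y ω|} ≤ ENNReal.ofReal (2 * Real.exp (-ε ^ 2 / (2 * c))) := by
  have hsplit : {ω | ε ≤ |Y ω|} = {ω | ε ≤ Y ω} ∪ {ω | ε ≤ (-Y) ω} := by
    ext ω
    exact le_abs (b := Y ω)
  rw [hsplit, ENNReal.le_ofReal_iff_toReal_le (measure_ne_top _ _) (by positivity), two_mul]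
  exact (measureReal_union_le _ _).trans (add_le_add (h.measure_ge_le hε) (h.neg.measure_ge_le hε))

lemma exp_neg_sq_div_le_pow (k : ℕ) {σ : NNReal} (hσ : 0 < σ) :
    Real.exp (-(4 * (k + 1) * σ) ^ 2 / (2 * ↑(σ ^ 2))) ≤ (1 / 8) ^ (k + 1) := by
  have hσ' : (σ : ℝ) ≠ 0 := by positivity
  have hexp : Real.exp (-8) ≤ 1 / 8 := by
    rw [Real.exp_neg, ← one_div]
    exact one_div_le_one_div_of_le (by norm_num) (by linarith [Real.add_one_le_exp (8 : ℝ)])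
  calc Real.exp (-(4 * (k + 1) * σ) ^ 2 / (2 * ↑(σ ^ 2)))
      = Real.exp (-8 * (k + 1) ^ 2) := by
        congr 1
        push_cast
        field_simp
        ring
    _ ≤ Real.exp ((k + 1 : ℕ) * -8) := by
        refine Real.exp_le_exp.2 ?_
        push_cast
        nlinarith [show (0 : ℝ) ≤ k by positivity]
    _ = Real.exp (-8) ^ (k + 1) := Real.exp_nat_mul _ _
    _ ≤ (1 / 8) ^ (k + 1) := by gcongr

lemma measure_biUnion_le_abs_le_of_hasSubgaussianMGF [IsFiniteMeasure P] (k : ℕ)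
    {Y : ℕ → Ω → ℝ} {σ : NNReal} (hσ : 0 < σ)
    (hY : ∀ j < 2 ^ (k + 1), HasSubgaussianMGF (Y j) (σ ^ 2) P) :
    P (⋃ j ∈ Finset.range (2 ^ (k + 1)), {ω | 4 * (k + 1) * σ ≤ |Y j ω|}) ≤
      ENNReal.ofReal (1 / 2 * (1 / 4) ^ k) :=
  calc _ ≤ ∑ j ∈ Finset.range (2 ^ (k + 1)), P {ω | 4 * (k + 1) * σ ≤ |Y j ω|} :=
        measure_biUnion_finset_le _ _
    _ ≤ ∑ j ∈ Finset.range (2 ^ (k + 1)), ENNReal.ofReal (2 * (1 / 8) ^ (k + 1)) := by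
        gcongr with j hj
        refine (measure_le_abs_le_of_hasSubgaussianMGF (hY j (Finset.mem_range.1 hj))
          (by positivity)).trans ?_
        gcongr
        exact exp_neg_sq_div_le_pow k hσ
    _ = ENNReal.ofReal (1 / 2 * (1 / 4) ^ k) := by
        rw [Finset.sum_const, Finset.card_range, nsmul_eq_mul, ← ENNReal.ofReal_natCast,
          ← ENNReal.ofReal_mul (by positivity)]
        congr 1
        rw [show (1 / 8 : ℝ) = 1 / 2 * (1 / 4) by norm_num, mul_pow, pow_succ (1 / 4)]
        push_cast
        rw [mul_left_comm, ← mul_assoc (2 ^ (k + 1)), ← mul_pow]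
        norm_num
        ring

lemma frequently_forall_abs_le_of_hasSubgaussianMGF [IsProbabilityMeasure P] {Y : ℕ → ℕ → Ω → ℝ}
    {σ : ℕ → NNReal} (hσ : ∀ k, 0 < σ k)
    (hY : ∀ k, ∀ j < 2 ^ (k + 1), HasSubgaussianMGF (Y k j) (σ k ^ 2) P) :
    ∃ᵐ ω ∂P, ∀ k, ∀ j < 2 ^ (k + 1), |Y k j ω| ≤ 4 * (k + 1) * σ k := by
  let bad (k : ℕ) : Set Ω := ⋃ j ∈ Finset.range (2 ^ (k + 1)), {ω | 4 * (k + 1) * σ k ≤ |Y k j ω|}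
  have hbad : P (⋃ k, bad k) < 1 := by
    have hsum : HasSum (fun k : ℕ ↦ 1 / 2 * (1 / 4 : ℝ) ^ k) (1 / 2 * (1 - 1 / 4)⁻¹) :=
      (hasSum_geometric_of_lt_one (by norm_num) (by norm_num)).mul_left _
    calc _ ≤ ∑' k, ENNReal.ofReal (1 / 2 * (1 / 4) ^ k) :=
          (measure_iUnion_le _).trans (ENNReal.tsum_le_tsum fun k ↦
            measure_biUnion_le_abs_le_of_hasSubgaussianMGF k (hσ k) (hY k))
      _ = ENNReal.ofReal (1 / 2 * (1 - 1 / 4)⁻¹) := by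
          rw [← ENNReal.ofReal_tsum_of_nonneg (fun _ ↦ by positivity) hsum.summable, hsum.tsum_eq]
      _ < 1 := ENNReal.ofReal_lt_one.2 (by norm_num)
  refine fun hgood ↦ hbad.ne' ?_
  rw [← measure_univ (μ := P)]
  refine measure_congr (Filter.eventuallyEq_univ.2 ?_).symm
  filter_upwards [hgood] with ω hω
  push Not at hω
  obtain ⟨k, j, hj, hlt⟩ := hω
  exact mem_iUnion_of_mem k (mem_biUnion (Finset.mem_range.2 hj) hlt.le)

end SubGaussian

section Hitting

variable {Ω α β : Type*} [MeasurableSpace Ω] [TopologicalSpace α] [SecondCountableTopology α]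
  [MetricSpace β] [SecondCountableTopology β] [MeasurableSpace β] [BorelSpace β]
  {ψ : Ω → α → β} {K : Set α}

lemma measurableSet_setOf_exists_eq (hK : IsCompact K) (hmeas : ∀ x ∈ K, Measurable fun ω ↦ ψ ω x)
    (hcont : ∀ ω, ContinuousOn (ψ ω) K) :
    MeasurableSet {p : Ω × β | ∃ x ∈ K, ψ p.1 x = p.2} := by
  obtain ⟨s, hs_countable, hs_dense⟩ := TopologicalSpace.exists_countable_dense K
  have hG : {p : Ω × β | ∃ x ∈ K, ψ p.1 x = p.2} =
      ⋂ n : ℕ, ⋃ q ∈ s, {p : Ω × β | dist (ψ p.1 q) p.2 < 1 / (n + 1)} := by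
    ext ⟨ω, z⟩
    simp only [mem_iInter, mem_iUnion, mem_ofPred_eq, exists_prop]
    refine ⟨fun ⟨x, hx, hxz⟩ n ↦ ?_, fun h ↦ ?_⟩
    · have hopen : IsOpen {q : K | dist (ψ ω q) z < 1 / (n + 1)} :=
        isOpen_lt ((hcont ω).domRestrict.dist continuous_const) continuous_const
      have hmem : dist (ψ ω x) z < 1 / (n + 1) := by
        rw [hxz, dist_self]
        positivity
      obtain ⟨q, hq, hqs⟩ := hs_dense.inter_open_nonempty _ hopen ⟨⟨x, hx⟩, hmem⟩
      exact ⟨q, hqs, hq⟩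
    · have hclosed := (hK.image_of_continuousOn (hcont ω)).isClosed
      refine hclosed.closure_subset (Metric.mem_closure_iff.2 fun ε hε ↦ ?_)
      obtain ⟨n, hn⟩ := exists_nat_one_div_lt hε
      obtain ⟨q, -, hq⟩ := h n
      exact ⟨ψ ω q, mem_image_of_mem _ q.2, dist_comm z _ ▸ hq.trans hn⟩
  rw [hG]
  exact .iInter fun n ↦ .biUnion hs_countable fun q _ ↦ measurableSet_lt
    (((hmeas q q.2).comp measurable_fst).dist measurable_snd) measurable_const

lemma exists_measure_setOf_exists_eq_pos {P : Measure Ω} [SFinite P] {ν : Measure β} [SFinite ν]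
    (hK : IsCompact K) (hmeas : ∀ x ∈ K, Measurable fun ω ↦ ψ ω x)
    (hcont : ∀ ω, ContinuousOn (ψ ω) K) (hpos : ∃ᵐ ω ∂P, 0 < ν (ψ ω '' K)) :
    ∃ z, 0 < P {ω | ∃ x ∈ K, ψ ω x = z} := by
  by_contra! hnull
  have hG := measurableSet_setOf_exists_eq hK hmeas hcont
  have hprod : (P.prod ν) {p : Ω × β | ∃ x ∈ K, ψ p.1 x = p.2} = 0 := by
    rw [Measure.prod_apply_symm hG, lintegral_eq_zero_iff (measurable_measure_prodMk_right hG)]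
    exact .of_forall fun z ↦ nonpos_iff_eq_zero.1 (hnull z)
  rw [Measure.measure_prod_null hG] at hprod
  exact hpos (hprod.mono fun ω hω ↦ hω.not_gt)

end Hitting

lemma exists_measure_setOf_exists_add_eq_pos {Ω : Type*} [MeasurableSpace Ω] {P : Measure Ω}
    [SFinite P] {h : Ω → ℝ → ℝ} {K : Set ℝ} {L : NNReal} (hK : IsCompact K) (hK_pos : 0 < volume K)
    (hmeas : ∀ x ∈ K, Measurable fun ω ↦ h ω x) (hcont : ∀ ω, ContinuousOn (h ω) K) (hL : L < 1)
    (hlip : ∃ᵐ ω ∂P, LipschitzOnWith L (h ω) K) : ∃ z, 0 < P {ω | ∃ x ∈ K, x + h ω x = z} :=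
  exists_measure_setOf_exists_eq_pos (ν := volume) hK (fun x hx ↦ (hmeas x hx).const_add x)
    (fun ω ↦ continuousOn_id.add (hcont ω))
    (hlip.mono fun _ hω ↦ volume_image_add_pos hω hL hK_pos)

lemma exists_measure_setOf_mem_coordSlice_pos {Ω α : Type*} [MeasurableSpace Ω] {P : Measure Ω}
    {d : ℕ} {i : Fin d} {z : ℝ}
    {Y : Ω → α → EuclideanSpace ℝ (Fin d)} {E : Set α} (hpos : 0 < P {ω | ∃ t ∈ E, Y ω t i = z}) :
    ∃ M ≥ (0 : ℝ), 0 < P {ω | ∃ t ∈ E, Y ω t ∈ coordSlice i z M} := by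
  have hunion : {ω | ∃ t ∈ E, Y ω t i = z} =
      ⋃ n : ℕ, {ω | ∃ t ∈ E, Y ω t ∈ coordSlice i z n} := by
    ext ω
    simp only [mem_ofPred_eq, mem_iUnion, coordSlice]
    refine ⟨fun ⟨t, ht, hz⟩ ↦ ?_, fun ⟨_, t, ht, hz, _⟩ ↦ ⟨t, ht, hz⟩⟩
    obtain ⟨n, hn⟩ := exists_nat_ge ‖Y ω t‖
    exact ⟨n, t, ht, hz, hn⟩
  obtain ⟨n, hn⟩ := exists_measure_pos_of_not_measure_iUnion_null (hunion ▸ hpos.ne')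
  exact ⟨n, n.cast_nonneg, hn⟩

section Weights

open Filter Topology

/-- The sequence `2⁻ᵏ (k + 1)⁻ᵖ`. With `p = 3` it controls the increments of the time change at
level `k`, with `p = 2` the gaps of the Cantor set; the lost power of `k` pays for a
union bound over `2ᵏ` Gaussian increments. -/
noncomputable def dyadicWeight (p k : ℕ) : ℝ := (1 / 2) ^ k / (k + 1) ^ p

lemma dyadicWeight_pos (p k : ℕ) : 0 < dyadicWeight p k := by
  unfold dyadicWeight
  positivity

lemma dyadicWeight_succ_le (p k : ℕ) : dyadicWeight p (k + 1) ≤ dyadicWeight p k / 2 := by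
  rw [dyadicWeight, dyadicWeight, pow_succ, ← div_eq_mul_one_div, div_right_comm]
  gcongr
  simp

lemma dyadicWeight_le_two_pow_mul (p k : ℕ) :
    dyadicWeight p k ≤ 2 ^ (p + 1) * dyadicWeight p (k + 1) := by
  have hle : ((k + 1 : ℕ) + 1 : ℝ) ≤ 2 * (k + 1) := by
    push_cast
    linarith [show (0 : ℝ) ≤ k by positivity]
  calc dyadicWeight p k = 2 ^ (p + 1) * ((1 / 2) ^ (k + 1) / (2 * (k + 1)) ^ p) := by
        rw [dyadicWeight, mul_pow, pow_succ (1 / 2 : ℝ), pow_succ (2 : ℝ)]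
        field_simp
    _ ≤ 2 ^ (p + 1) * dyadicWeight p (k + 1) := by
        unfold dyadicWeight
        gcongr

lemma succ_mul_dyadicWeight_succ (p k : ℕ) :
    (k + 1) * dyadicWeight (p + 1) k = dyadicWeight p k := by
  rw [dyadicWeight, dyadicWeight, pow_succ]
  field_simp

/-- The radii of the gaps of the Cantor set. The factor `1 / 8` makes the total length of the gaps
less than `1`. -/
noncomputable def gapRadius (k : ℕ) : ℝ := dyadicWeight 2 k / 8

lemma gapRadius_pos (k : ℕ) : 0 < gapRadius k := div_pos (dyadicWeight_pos 2 k) (by norm_num)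

lemma volume_fatCantor_gapRadius_pos : 0 < volume (fatCantor gapRadius) := by
  refine volume_fatCantor_pos ?_
  have hterm (k : ℕ) : (2 ^ k + 1) * ENNReal.ofReal (2 * gapRadius k) ≤
      ENNReal.ofReal (1 / 2 * (1 / (k + 1 : ℕ) ^ 2)) := by
    have hcast : (2 ^ k + 1 : ℝ≥0∞) = ENNReal.ofReal (2 ^ k + 1) := by
      rw [ENNReal.ofReal_add (by positivity) one_pos.le, ENNReal.ofReal_pow zero_le_two]
      simp
    rw [hcast, ← ENNReal.ofReal_mul (by positivity)]
    refine ENNReal.ofReal_le_ofReal ?_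
    calc (2 ^ k + 1 : ℝ) * (2 * gapRadius k) ≤ (2 ^ k + 2 ^ k) * (2 * gapRadius k) := by
          have := (gapRadius_pos k).le
          gcongr
          exact one_le_pow₀ one_le_two
      _ = 1 / 2 * (1 / (k + 1 : ℕ) ^ 2) := by
          rw [gapRadius, dyadicWeight, one_div_pow]
          push_cast
          field_simp
          norm_num
  have hsum : HasSum (fun k : ℕ ↦ 1 / 2 * (1 / (k + 1 : ℕ) ^ 2 : ℝ))
      (1 / 2 * (Real.pi ^ 2 / 6)) := by
    have hzeta := ((hasSum_nat_add_iff' 1).2 hasSum_zeta_two).mul_left (1 / 2)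
    rwa [Finset.sum_range_one, Nat.cast_zero, zero_pow two_ne_zero, _root_.div_zero,
      sub_zero] at hzeta
  calc _ ≤ ∑' k : ℕ, ENNReal.ofReal (1 / 2 * (1 / (k + 1 : ℕ) ^ 2)) := ENNReal.tsum_le_tsum hterm
    _ = ENNReal.ofReal (1 / 2 * (Real.pi ^ 2 / 6)) := by
        rw [← ENNReal.ofReal_tsum_of_nonneg (fun _ ↦ by positivity) hsum.summable, hsum.tsum_eq]
    _ < 1 := ENNReal.ofReal_lt_one.2 (by nlinarith [Real.pi_pos, Real.pi_lt_d2])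

lemma exists_half_pow_le_mul_dyadicWeight_rpow (p : ℕ) {e : ℝ} (he : e < 1) :
    ∃ Q, ∀ k, (1 / 2) ^ k ≤ Q * dyadicWeight p k ^ e := by
  set θ : ℝ := (1 / 2) ^ (1 - e) with hθ
  have hθ_pos : 0 < θ := by positivity
  have hθ_lt : θ < 1 := Real.rpow_lt_one (by norm_num) (by norm_num) (by linarith)
  obtain ⟨Q, hQ⟩ := (tendsto_pow_const_mul_const_pow_of_abs_lt_one p
    (by rwa [abs_of_pos hθ_pos])).bddAbove_range
  have hpoly (k : ℕ) : ((k + 1 : ℝ) ^ p) * θ ^ k ≤ Q / θ := by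
    rw [le_div_iff₀ hθ_pos, mul_assoc, ← pow_succ]
    exact_mod_cast hQ (mem_range_self (k + 1))
  have hQ_pos : 0 < Q / θ := (by simp : (0 : ℝ) < _).trans_le (hpoly 0)
  refine ⟨Q / θ, fun k ↦ ?_⟩
  have hθ_pow : θ ^ k * ((1 / 2) ^ k) ^ e = (1 / 2) ^ k := by
    rw [hθ, Real.rpow_pow_comm (by norm_num), ← Real.rpow_add (by positivity), sub_add_cancel,
      Real.rpow_one]
  have hden : ((k + 1 : ℝ) ^ p) ^ e ≤ (k + 1 : ℝ) ^ p :=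
    Real.rpow_le_self_of_one_le (one_le_pow₀ (by simp)) he.le
  calc ((1 / 2) ^ k : ℝ)
      = ((k + 1 : ℝ) ^ p * θ ^ k) * (((1 / 2) ^ k) ^ e / (k + 1 : ℝ) ^ p) := by
        rw [mul_comm _ (θ ^ k), mul_assoc, mul_div_cancel₀ _ (by positivity), hθ_pow]
    _ ≤ Q / θ * (((1 / 2) ^ k) ^ e / ((k + 1 : ℝ) ^ p) ^ e) := by
        gcongr
        exact hpoly k
    _ = Q / θ * dyadicWeight p k ^ e := by
        rw [dyadicWeight, Real.div_rpow (by positivity) (by positivity)]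

/-- The heights `c_k = κ w_k^{1/H}`, `w_k = 2⁻ᵏ (k + 1)⁻³`, of the jumps of the time change. They
are chosen so that `2ᵏ c_k^H → 0`, whereas `2⁻ᵏ = O(c_k^γ)` for every `γ < H`. -/
noncomputable def jumpHeight (H κ : ℝ) (k : ℕ) : ℝ := κ * dyadicWeight 3 k ^ (1 / H)

variable {H κ : ℝ}

lemma geometricDecay_jumpHeight (hH : H ∈ Ioo 0 1) (hκ : 0 < κ) :
    GeometricDecay (jumpHeight H κ) ((1 / 2) ^ (1 / H)) where
  pos k := mul_pos hκ (Real.rpow_pos_of_pos (dyadicWeight_pos 3 k) _)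
  ratio_lt := by
    have hexp : 1 < 1 / H := (one_lt_div hH.1).2 hH.2
    simpa only [Real.rpow_one] using
      Real.rpow_lt_rpow_of_exponent_gt (by norm_num : (0 : ℝ) < 1 / 2) (by norm_num) hexp
  succ_le k := by
    have hH0 := hH.1
    have hw := (dyadicWeight_pos 3 k).le
    calc jumpHeight H κ (k + 1) ≤ κ * (1 / 2 * dyadicWeight 3 k) ^ (1 / H) := by
          rw [one_div_mul_eq_div]
          exact mul_le_mul_of_nonneg_left (Real.rpow_le_rpow (dyadicWeight_pos 3 _).le
            (dyadicWeight_succ_le 3 k) (by positivity)) hκ.le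
      _ = (1 / 2) ^ (1 / H) * jumpHeight H κ k := by
          rw [Real.mul_rpow (by norm_num) hw, jumpHeight, mul_left_comm]

lemma jumpHeight_rpow (hκ : 0 ≤ κ) (γ : ℝ) (k : ℕ) :
    jumpHeight H κ k ^ γ = κ ^ γ * dyadicWeight 3 k ^ (γ / H) := by
  have hw := (dyadicWeight_pos 3 k).le
  rw [jumpHeight, Real.mul_rpow hκ (by positivity), ← Real.rpow_mul hw, one_div_mul_eq_div]

lemma tendsto_two_pow_mul_jumpHeight_rpow (hH : H ≠ 0) (hκ : 0 ≤ κ) :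
    Tendsto (fun k ↦ 2 ^ k * jumpHeight H κ k ^ H) atTop (𝓝 0) := by
  have heq (k : ℕ) : 2 ^ k * jumpHeight H κ k ^ H = κ ^ H * (1 / ((k : ℝ) + 1)) ^ 3 := by
    rw [jumpHeight_rpow hκ, div_self hH, Real.rpow_one, dyadicWeight, one_div_pow]
    field_simp
  simp_rw [heq]
  simpa using (tendsto_one_div_add_atTop_nhds_zero_nat.pow 3).const_mul (κ ^ H)

lemma exists_half_pow_le_mul_jumpHeight_rpow (hH : 0 < H) (hκ : 0 < κ) {γ : ℝ} (hγ : γ < H) :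
    ∃ Q, ∀ k, (1 / 2) ^ k ≤ Q * jumpHeight H κ k ^ γ := by
  obtain ⟨Q, hQ⟩ := exists_half_pow_le_mul_dyadicWeight_rpow 3 ((div_lt_one hH).2 hγ)
  refine ⟨Q / κ ^ γ, fun k ↦ ?_⟩
  rw [jumpHeight_rpow hκ.le, ← mul_assoc, div_mul_cancel₀ _ (by positivity)]
  exact hQ k

lemma exists_jumpHeight_le (hH : 0 < H) {D ℓ R : ℝ} (hD : 0 < D) (hℓ : 0 < ℓ) (hR : 0 < R) :
    ∃ κ > 0, D * jumpHeight H κ 0 ≤ ℓ ∧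
      ∀ k, (D * jumpHeight H κ k) ^ H ≤ R * dyadicWeight 3 k := by
  refine ⟨min ℓ (R ^ (1 / H)) / D, by positivity, ?_, fun k ↦ ?_⟩
  · rw [jumpHeight, ← mul_assoc, mul_div_cancel₀ _ hD.ne']
    simp [dyadicWeight]
  · have hw := dyadicWeight_pos 3 k
    rw [jumpHeight, ← mul_assoc, mul_div_cancel₀ _ hD.ne', Real.mul_rpow (by positivity)
      (by positivity), ← Real.rpow_mul hw.le, one_div_mul_cancel hH.ne', Real.rpow_one]
    gcongr
    calc min ℓ (R ^ (1 / H)) ^ H ≤ (R ^ (1 / H)) ^ H := by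
          gcongr
          exact min_le_right _ _
      _ = R := by rw [← Real.rpow_mul hR.le, one_div_mul_cancel hH.ne', Real.rpow_one]

lemma exists_geometricDecay (hH : H ∈ Ioo 0 1) {ℓ : ℝ} (hℓ : 0 < ℓ) (C : NNReal) :
    ∃ c ρ, GeometricDecay c ρ ∧ (1 - 2 * ρ)⁻¹ * c 0 ≤ ℓ ∧
      (∀ k, C * ((1 - 2 * ρ)⁻¹ * c k) ^ H ≤ dyadicWeight 3 k / 2048) ∧
      Tendsto (fun k ↦ 2 ^ k * c k ^ H) atTop (𝓝 0) ∧
      ∀ τ ∈ Ioo 0 H, ∃ Q, ∀ k, (1 / 2) ^ k ≤ Q * c k ^ (H - τ) := by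
  have hρ := (geometricDecay_jumpHeight hH one_pos).ratio_lt
  obtain ⟨κ, hκ, hcℓ, hcC⟩ := exists_jumpHeight_le (R := 1 / (2048 * (C + 1))) hH.1
    (inv_pos.2 (by linarith : 0 < 1 - 2 * (1 / 2 : ℝ) ^ (1 / H))) hℓ (by positivity)
  refine ⟨_, _, geometricDecay_jumpHeight hH hκ, hcℓ, fun k ↦ ?_,
    tendsto_two_pow_mul_jumpHeight_rpow hH.1.ne' hκ.le,
    fun τ hτ ↦ exists_half_pow_le_mul_jumpHeight_rpow hH.1 hκ (sub_lt_self H hτ.1)⟩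
  have hw := dyadicWeight_pos 3 k
  calc _ ≤ C * (1 / (2048 * (C + 1)) * dyadicWeight 3 k) := by gcongr; exact hcC k
    _ = C / (C + 1) * (dyadicWeight 3 k / 2048) := by field_simp
    _ ≤ 1 * (dyadicWeight 3 k / 2048) := by
        gcongr
        exact (div_le_one (by positivity)).2 (by simp)
    _ = dyadicWeight 3 k / 2048 := one_mul _

end Weights

section Paths

open Filter Topology ProbabilityTheory

lemma GeometricDecay.abs_dyadicJump_sub_parent_le {c : ℕ → ℝ} {ρ : ℝ} (hc : GeometricDecay c ρ)
    (k j : ℕ) :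
    |dyadicJump c (j / 2 ^ (k + 1)) - dyadicJump c (↑(j / 2) / 2 ^ k)| ≤ (1 - 2 * ρ)⁻¹ * c k := by
  refine hc.abs_dyadicJump_sub_le k ?_
  rw [dyadicIndex_div_two_pow, ← dyadicIndex_add_div k 1, dyadicIndex_div_two_pow, pow_one]

variable {Ω : Type*} [MeasurableSpace Ω] {P : Measure Ω} [IsProbabilityMeasure P]
  {X : Ω → ℝ → ℝ} {c : ℕ → ℝ} {ρ H a b : ℝ} {C : NNReal}

lemma frequently_lipschitzOnWith_comp_dyadicJump (hc : GeometricDecay c ρ) (hH : 0 ≤ H)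
    (hcb : (1 - 2 * ρ)⁻¹ * c 0 ≤ b - a)
    (hcC : ∀ k, C * ((1 - 2 * ρ)⁻¹ * c k) ^ H ≤ dyadicWeight 3 k / 2048)
    (hcont : ∀ ω, ContinuousOn (X ω) (Icc a b))
    (hsub : ∀ s ∈ Icc a b, ∀ t ∈ Icc a b,
      HasSubgaussianMGF (fun ω ↦ X ω s - X ω t) ((C * nndist s t ^ H) ^ 2) P) :
    ∃ᵐ ω ∂P, LipschitzOnWith (1 / 2) (fun x ↦ X ω (a + dyadicJump c x))
      (fatCantor gapRadius) := by
  have hmaps (x : ℝ) (hx : x ∈ Ico (0 : ℝ) 1) := hc.add_dyadicJump_mem_Icc hcb hx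
  -- Each increment stays below `4 (k + 1) σ k = dyadicWeight 2 k / 512`; chaining multiplies this
  -- by `4`, and `dyadicWeight 2 k ≤ 8 * dyadicWeight 2 (k + 1)` makes it half a gap radius.
  set σ : ℕ → NNReal := fun k ↦ (dyadicWeight 3 k / 2048).toNNReal
  have hw (k : ℕ) : 0 < dyadicWeight 3 k / 2048 := div_pos (dyadicWeight_pos 3 k) (by norm_num)
  have hσ (k : ℕ) : 0 < σ k := Real.toNNReal_pos.2 (hw k)
  have hbound (k : ℕ) : 4 * (k + 1) * (σ k : ℝ) = dyadicWeight 2 k / 512 := by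
    rw [Real.coe_toNNReal _ (hw k).le, ← succ_mul_dyadicWeight_succ 2]
    ring
  have hincr (k j : ℕ) (hj : j < 2 ^ (k + 1)) : HasSubgaussianMGF
      (fun ω ↦ X ω (a + dyadicJump c (j / 2 ^ (k + 1))) - X ω (a + dyadicJump c (↑(j / 2) / 2 ^ k)))
      (σ k ^ 2) P := by
    refine hasSubgaussianMGF_mono (hsub _ (hmaps _ (div_two_pow_mem_Ico hj)) _
      (hmaps _ (div_two_pow_mem_Ico (by lia)))) ?_
    gcongr
    rw [← NNReal.coe_le_coe, Real.coe_toNNReal _ (hw k).le]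
    push_cast
    rw [dist_add_left, Real.dist_eq]
    refine le_trans ?_ (hcC k)
    gcongr
    exact hc.abs_dyadicJump_sub_parent_le k j
  refine (frequently_forall_abs_le_of_hasSubgaussianMGF hσ hincr).mono fun ω hω ↦ ?_
  simp_rw [hbound] at hω
  refine lipschitzOnWith_fatCantor (gapRadius_pos 0)
    (fun k ↦ ?_) hω (fun x hx ↦ ?_) (fun k ↦ ?_)
  · linarith [dyadicWeight_succ_le 2 k]
  · have hx' := fatCantor_subset_Ico (gapRadius_pos 0) hx
    refine (hcont ω _ (hmaps x hx')).tendsto.comp (tendsto_nhdsWithin_iff.2 ⟨?_, ?_⟩)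
    · exact (hc.tendsto_dyadicJump_dyadicFloor x).const_add a
    · exact .of_forall fun k ↦ hmaps _ (dyadicFloor_mem_Ico hx' k)
  · have := dyadicWeight_le_two_pow_mul 2 k
    norm_num [gapRadius] at this ⊢
    linarith

end Paths

section Drift

open ProbabilityTheory

variable {Ω : Type*} [MeasurableSpace Ω] {P : Measure Ω} [IsProbabilityMeasure P] {H : ℝ} {d : ℕ}
  {i : Fin d} {B : Ω → ℝ → EuclideanSpace ℝ (Fin d)} {a b : ℝ} {C : NNReal}

lemma exists_measure_add_single_dyadicInv_mem_coordSlice_pos {c : ℕ → ℝ} {ρ : ℝ}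
    (hc : GeometricDecay c ρ) (hH : 0 ≤ H) (hcb : (1 - 2 * ρ)⁻¹ * c 0 ≤ b - a)
    (hcC : ∀ k, C * ((1 - 2 * ρ)⁻¹ * c k) ^ H ≤ dyadicWeight 3 k / 2048)
    (hmeas : ∀ t ∈ Icc a b, Measurable fun ω ↦ B ω t i)
    (hcont : ∀ ω, ContinuousOn (fun t ↦ B ω t i) (Icc a b))
    (hsub : ∀ s ∈ Icc a b, ∀ t ∈ Icc a b,
      HasSubgaussianMGF (fun ω ↦ B ω s i - B ω t i) ((C * nndist s t ^ H) ^ 2) P) :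
    ∃ z, ∃ M ≥ (0 : ℝ), 0 < P {ω | ∃ t ∈ (fun x ↦ a + dyadicJump c x) '' fatCantor gapRadius,
      B ω t + EuclideanSpace.single i (dyadicInv c (t - a)) ∈ coordSlice i z M} := by
  have hmapsK : MapsTo (fun x ↦ a + dyadicJump c x) (fatCantor gapRadius) (Icc a b) :=
    fun x hx ↦ hc.add_dyadicJump_mem_Icc hcb (fatCantor_subset_Ico (gapRadius_pos 0) hx)
  have hlip := frequently_lipschitzOnWith_comp_dyadicJump (X := fun ω t ↦ B ω t i) hc hH hcb hcC
    hcont hsub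
  obtain ⟨z, hz⟩ := exists_measure_setOf_exists_add_eq_pos (isCompact_fatCantor _)
    volume_fatCantor_gapRadius_pos (fun x hx ↦ hmeas _ (hmapsK hx))
    (fun ω ↦ (hcont ω).comp ((hc.continuousOn_dyadicJump gapRadius_pos).const_add a) hmapsK)
    (NNReal.half_lt_self one_ne_zero) hlip
  refine ⟨z, exists_measure_setOf_mem_coordSlice_pos (hz.trans_le (measure_mono ?_))⟩
  rintro ω ⟨x, hx, hxz⟩
  refine ⟨a + dyadicJump c x, mem_image_of_mem _ hx, ?_⟩
  rw [add_sub_cancel_left, hc.dyadicInv_dyadicJump hx.1, PiLp.add_apply, PiLp.single_apply,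
    if_pos rfl, add_comm]
  exact hxz

theorem statement14_general (P : Measure Ω) [IsProbabilityMeasure P] (hH : H ∈ Ioo (0 : ℝ) 1)
    (i : Fin d) (B : Ω → ℝ → EuclideanSpace ℝ (Fin d)) (hab : a < b) (C : NNReal)
    (hmeas : ∀ t ∈ Icc a b, Measurable fun ω ↦ B ω t i)
    (hcont : ∀ ω, ContinuousOn (fun t ↦ B ω t i) (Icc a b))
    (hsub : ∀ s ∈ Icc a b, ∀ t ∈ Icc a b,
      HasSubgaussianMGF (fun ω ↦ B ω s i - B ω t i) ((C * nndist s t ^ H) ^ 2) P) :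
    ∃ f : ℝ → EuclideanSpace ℝ (Fin d),
      (∀ τ : ℝ, τ ∈ Ioo 0 H → HolderWithExp f (H - τ) (Icc a b)) ∧
      ¬ HolderWithExp f H (Icc a b) ∧
      ∃ (E : Set ℝ) (F : Set (EuclideanSpace ℝ (Fin d))),
        IsCompact E ∧ E ⊆ Icc a b ∧ IsCompact F ∧
        capacity (parabolicDist H) d (E ×ˢ F) = 0 ∧
        hMeasure (parabolicDist H) d (E ×ˢ F) = 0 ∧
        0 < P {ω | ∃ t ∈ E, B ω t + f t ∈ F} := by
  obtain ⟨c, ρ, hc, hcb, hcC, hlim, hQ⟩ := exists_geometricDecay hH (sub_pos.2 hab) C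
  obtain ⟨z, M, hM, hhit⟩ := exists_measure_add_single_dyadicInv_mem_coordSlice_pos hc hH.1.le
    hcb hcC hmeas hcont hsub
  have hK : fatCantor gapRadius ⊆ Ico 0 1 := fatCantor_subset_Ico (gapRadius_pos 0)
  have hE_compact := (isCompact_fatCantor gapRadius).image_of_continuousOn
    ((hc.continuousOn_dyadicJump gapRadius_pos).const_add a)
  have hE_subset : (fun x ↦ a + dyadicJump c x) '' fatCantor gapRadius ⊆ Icc a b :=
    image_subset_iff.2 fun x hx ↦ hc.add_dyadicJump_mem_Icc hcb (hK hx)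
  have hnull := hMeasure_prod_coordSlice_eq_zero i z hM fun ε hε ↦
    hc.exists_finset_cover_image_dyadicJump hH.1 hlim a hK hε
  refine ⟨fun t ↦ EuclideanSpace.single i (dyadicInv c (t - a)), fun τ hτ ↦ ?_, fun hf ↦ ?_,
    _, coordSlice i z M, hE_compact, hE_subset, isCompact_coordSlice i z M,
    capacity_eq_zero_of_hMeasure_eq_zero (mod_cast i.pos) measurable_parabolicDist
      (parabolicDist_triangle hH) hnull, hnull, hhit⟩
  · obtain ⟨Q, hQ⟩ := hQ τ hτ
    exact (holderWithExp_single_sub_iff i _ a b).2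
      ((hc.holderWithExp_dyadicInv (sub_pos.2 hτ.2) hQ).mono Icc_subset_Ici_self)
  · exact hc.not_holderWithExp_dyadicInv hH.1 hlim
      (((holderWithExp_single_sub_iff i _ a b).1 hf).mono (Icc_subset_Icc_right hcb))

end Drift

namespace IsFBM

open ProbabilityTheory

variable {Ω : Type*} [MeasurableSpace Ω] {P : Measure Ω} {H : ℝ} {d : ℕ}
  {B : Ω → ℝ → EuclideanSpace ℝ (Fin d)} (hB : IsFBM P H d B)
include hB

lemma measurable_coord (i : Fin d) (t : ℝ) : Measurable fun ω ↦ B ω t i :=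
  (EuclideanSpace.proj (𝕜 := ℝ) i).measurable.comp (hB.meas t)

lemma continuousOn_coord (i : Fin d) (ω : Ω) : ContinuousOn (fun t ↦ B ω t i) (Icc 0 1) :=
  (EuclideanSpace.proj (𝕜 := ℝ) i).continuous.comp_continuousOn (hB.cont ω)

lemma map_sub_coord (hH : 0 < H) (i : Fin d) {s t : ℝ} (hs : s ∈ Icc (0 : ℝ) 1)
    (ht : t ∈ Icc (0 : ℝ) 1) :
    P.map (fun ω ↦ B ω s i - B ω t i) = gaussianReal 0 ((nndist s t ^ H) ^ 2) := by
  obtain ⟨v, hv, hlaw⟩ := hB.gaussian i 2 ![s, t] ![1, -1] (Fin.forall_fin_two.2 ⟨hs, ht⟩)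
  have hvar : v = (nndist s t ^ H) ^ 2 := by
    rw [← NNReal.coe_inj, hv]
    push_cast
    rw [Real.dist_eq, ← Real.rpow_mul_natCast (abs_nonneg _), Nat.cast_ofNat, mul_comm H 2]
    simp only [Fin.sum_univ_two, fbmCov, Matrix.cons_val_zero, Matrix.cons_val_one, sub_self,
      abs_zero, Real.zero_rpow (mul_pos two_pos hH).ne', abs_sub_comm t s]
    ring
  simpa [Fin.sum_univ_two, ← sub_eq_add_neg, hvar] using hlaw

lemma hasSubgaussianMGF_sub (hH : 0 < H) (i : Fin d) {s t : ℝ} (hs : s ∈ Icc (0 : ℝ) 1)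
    (ht : t ∈ Icc (0 : ℝ) 1) :
    HasSubgaussianMGF (fun ω ↦ B ω s i - B ω t i) ((nndist s t ^ H) ^ 2) P :=
  hasSubgaussianMGF_of_map_eq_gaussianReal (hB.map_sub_coord hH i hs ht)

end IsFBM

/-- Theorem 4.4, sharpness: there exist a drift `f` which is
`(H-τ)`-Hölder continuous for every `τ ∈ (0,H)` but not `H`-Hölder continuous, and
compact sets `E ⊆ I`, `F ⊆ ℝ^d` with
`C^d_{ρ_H}(E×F) = ℋ^d_{ρ_H}(E×F) = 0` while `ℙ((B^H+f)(E) ∩ F ≠ ∅) > 0`;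
i.e. the two-sided hitting estimate of Theorem 3.1 fails for such a drift. -/
theorem statement14 {Ω : Type*} [MeasurableSpace Ω] (ℙ : Measure Ω) [IsProbabilityMeasure ℙ]
    (H : ℝ) (hH : H ∈ Set.Ioo (0 : ℝ) 1) (d : ℕ) (hd : 0 < d)
    (B : Ω → ℝ → EuclideanSpace ℝ (Fin d)) (hB : IsFBM ℙ H d B)
    (a b : ℝ) (ha : 0 < a) (hab : a < b) (hb : b ≤ 1) :
    ∃ f : ℝ → EuclideanSpace ℝ (Fin d),
      (∀ τ : ℝ, τ ∈ Set.Ioo 0 H → HolderWithExp f (H - τ) (Set.Icc a b)) ∧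
      ¬ HolderWithExp f H (Set.Icc a b) ∧
      ∃ (E : Set ℝ) (F : Set (EuclideanSpace ℝ (Fin d))),
        IsCompact E ∧ E ⊆ Set.Icc a b ∧ IsCompact F ∧
        capacity (parabolicDist H) d (E ×ˢ F) = 0 ∧
        hMeasure (parabolicDist H) d (E ×ˢ F) = 0 ∧
        0 < ℙ {ω | ∃ t ∈ E, B ω t + f t ∈ F} := by
  have hsub : Icc a b ⊆ Icc 0 1 := Icc_subset_Icc ha.le hb
  exact statement14_general ℙ hH ⟨0, hd⟩ B hab 1 (fun t _ ↦ hB.measurable_coord _ t)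
    (fun ω ↦ (hB.continuousOn_coord _ ω).mono hsub) fun s hs t ht ↦ by
      simpa only [one_mul] using hB.hasSubgaussianMGF_sub hH.1 _ (hsub hs) (hsub ht)
end

section
/- Let B^H = {B^H(t), t ∈ [0,1]} be a d-dimensional fractional Brownian motion of Hurst index H ∈ (0,1), let I = [a,b] with 0 < a < b ≤ 1, let f : [0,1] → ℝ^d be a bounded Borel measurable function, and let E ⊆ I be a Borel set. Then: (i) if C^{d}_{ρ_{d_H}}(Gr_E(f)) > 0, then λ_d((B^H + f)(E)) > 0 with positive probability; (ii) if ℋ^{d}_{ρ_{d_H}}(Gr_E(f)) = 0, then λ_d((B^H + f)(E)) = 0 almost surely. -/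
open MeasureTheory Set ENNReal

/-!
Write `κ = ρ ^ (-d)` for the kernel in the parabolic metric `ρ`.

**Positive capacity.** A Gaussian small-ball estimate bounds the probability that `B s + f s` and
`B t + f t` lie within `r` of each other by `C * κ((s, f s), (t, f t)) * r ^ d`. If `ν` is a
probability measure on `E` whose image on the graph has finite `d`-energy, then Fubini and Fatou
show that almost surely the occupation measure of `B + f` under `ν` has finite lower density at
almost every point charged by it. By Besicovitch differentiation it is then absolutely continuous,
and since it is carried by `(B + f)(E)`, this image cannot be Lebesgue null.

**Null Hausdorff measure.** Dyadic chaining, applied to a moment of large order of the increments,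
shows that the oscillation of `B` over a time interval of length `r ^ (1 / H)` is of order `r` in
`L ^ p`. The part of the graph inside a parabolic ball of radius `r` is thus mapped into a random
ball whose expected volume is `O(r ^ d)`. Summing over an efficient cover of the graph makes the
expected volume of `(B + f)(E)` arbitrarily small.
-/

open Filter Topology
open ProbabilityTheory (gaussianReal gaussianPDF gaussianPDFReal stdGaussian gaussianReal_apply
  map_pi_eq_stdGaussian iIndepFun gaussianReal_map_const_mul IsKolmogorovProcess)

section AbsolutelyContinuous

variable {V : Type*} [MetricSpace V] [SecondCountableTopology V] [HasBesicovitchCovering V]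
  [MeasurableSpace V] [BorelSpace V]

theorem absolutelyContinuous_of_ae_liminf_closedBall_div_lt_top {m μ : Measure V}
    [IsFiniteMeasure m] [IsLocallyFiniteMeasure μ] {r : ℕ → ℝ} (hr : Tendsto r atTop (𝓝[>] 0))
    (h : ∀ᵐ x ∂m, liminf (fun n => m (Metric.closedBall x (r n)) / μ (Metric.closedBall x (r n)))
      atTop < ∞) :
    m ≪ μ := by
  intro A hA
  let S : ℕ → Set V := fun N => {x | x ∈ A ∧
    liminf (fun n => m (Metric.closedBall x (r n)) / μ (Metric.closedBall x (r n))) atTop < N}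
  have hS : ∀ N, m (S N) = 0 := fun N => by
    suffices m (S N) ≤ ((N : NNReal) • μ) (S N) from le_antisymm
      (this.trans (by simp [measure_mono_null (fun x (hx : x ∈ S N) => hx.1) hA])) zero_le
    refine (Besicovitch.vitaliFamily m).measure_le_of_frequently_le _
      Measure.AbsolutelyContinuous.rfl _ fun x hx => ?_
    refine ((Besicovitch.tendsto_filterAt m x).comp hr).frequently
      ((frequently_lt_of_liminf_lt (by isBoundedDefault) hx.2).mono fun n hn => ?_)
    have hN : (N : ℝ≥0∞) ≠ 0 := (zero_le.trans_lt hn).ne'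
    exact (ENNReal.div_le_iff_le_mul (.inr (natCast_ne_top N)) (.inr hN)).1 hn.le
  refine measure_mono_null (fun x hxA => ?_) (measure_union_null (measure_iUnion_null hS) h)
  refine or_iff_not_imp_right.2 fun hx => ?_
  obtain ⟨N, hN⟩ := ENNReal.exists_nat_gt (not_not.1 hx).ne
  exact mem_iUnion.2 ⟨N, hxA, hN⟩

end AbsolutelyContinuous

theorem measure_image_pos_of_map_absolutelyContinuous {T V : Type*} [MeasurableSpace T]
    [MeasurableSpace V] {ν : Measure T} {μ : Measure V} {X : T → V} (hX : AEMeasurable X ν)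
    (hac : ν.map X ≪ μ) {E : Set T} (hE : ν E ≠ 0) : 0 < μ (X '' E) := by
  refine pos_iff_ne_zero.2 fun h => hE (measure_mono_null (subset_preimage_image X E) ?_)
  exact le_antisymm ((Measure.le_map_apply hX _).trans (hac h).le) zero_le

section RandomField

variable {Ω T V : Type*} [MeasurableSpace Ω] [MeasurableSpace T] [MeasurableSpace V]

section PseudoMetricSpace

variable [PseudoMetricSpace V] [SecondCountableTopology V] [OpensMeasurableSpace V]

theorem measurableSet_dist_le {X : Ω → T → V} (hX : Measurable X.uncurry) (r : ℝ) :
    MeasurableSet {z : (Ω × T) × T | dist (X z.1.1 z.2) (X z.1.1 z.1.2) ≤ r} :=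
  measurableSet_le ((hX.comp (by fun_prop : Measurable fun z : (Ω × T) × T => (z.1.1, z.2))).dist
    (hX.comp measurable_fst)) measurable_const

theorem measurable_measure_dist_le (ν : Measure T) [SFinite ν] {X : Ω → T → V}
    (hX : Measurable X.uncurry) (r : ℝ) :
    Measurable fun z : Ω × T => ν {t | dist (X z.1 t) (X z.1 z.2) ≤ r} :=
  measurable_measure_prodMk_left (measurableSet_dist_le hX r)

theorem lintegral_measure_dist_le_div_le {ℙ : Measure Ω} [SFinite ℙ] {ν : Measure T} [SFinite ν]
    {X : Ω → T → V} (hX : Measurable X.uncurry) {k : T → T → ℝ≥0∞} {r : ℝ} {c : ℝ≥0∞}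
    (h : ∀ᵐ s ∂ν, ∀ᵐ t ∂ν, ℙ {ω | dist (X ω t) (X ω s) ≤ r} ≤ k s t * c) :
    ∫⁻ z, ν {t | dist (X z.1 t) (X z.1 z.2) ≤ r} / c ∂(ℙ.prod ν) ≤ ∫⁻ s, ∫⁻ t, k s t ∂ν ∂ν := by
  rw [lintegral_prod_symm' _ ((measurable_measure_dist_le ν hX r).div_const c)]
  refine lintegral_mono_ae (h.mono fun s hs => ?_)
  have hball_s : MeasurableSet {z : Ω × T | dist (X z.1 z.2) (X z.1 s) ≤ r} :=
    (by fun_prop : Measurable fun z : Ω × T => ((z.1, s), z.2)) (measurableSet_dist_le hX r)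
  have fubini : ∫⁻ ω, ν {t | dist (X ω t) (X ω s) ≤ r} ∂ℙ
      = ∫⁻ t, ℙ {ω | dist (X ω t) (X ω s) ≤ r} ∂ν :=
    (Measure.prod_apply (μ := ℙ) (ν := ν) hball_s).symm.trans (Measure.prod_apply_symm hball_s)
  have hmeas : Measurable fun ω => ν {t | dist (X ω t) (X ω s) ≤ r} :=
    measurable_measure_prodMk_left hball_s
  have hmeas' : Measurable fun t => ℙ {ω | dist (X ω t) (X ω s) ≤ r} :=
    measurable_measure_prodMk_right hball_s
  simp only [div_eq_mul_inv]
  rw [lintegral_mul_const _ hmeas, fubini, ← lintegral_mul_const _ hmeas']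
  exact lintegral_mono_ae (hs.mono fun t ht => ENNReal.div_le_of_le_mul ht)

end PseudoMetricSpace

theorem ae_map_absolutelyContinuous_of_measure_dist_le [NormedAddCommGroup V] [NormedSpace ℝ V]
    [FiniteDimensional ℝ V] [BorelSpace V] {ℙ : Measure Ω} [SFinite ℙ] {ν : Measure T}
    [IsFiniteMeasure ν] (μ : Measure V) [μ.IsAddHaarMeasure]
    {X : Ω → T → V} (hX : Measurable X.uncurry) {k : T → T → ℝ≥0∞}
    (hk : ∫⁻ s, ∫⁻ t, k s t ∂ν ∂ν ≠ ∞)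
    (h : ∀ᵐ s ∂ν, ∀ᵐ t ∂ν, ∀ r > 0,
      ℙ {ω | dist (X ω t) (X ω s) ≤ r} ≤ k s t * μ (Metric.closedBall 0 r)) :
    ∀ᵐ ω ∂ℙ, ν.map (X ω) ≪ μ := by
  let r : ℕ → ℝ := fun n => 1 / ((n : ℝ) + 1)
  have hr0 : ∀ n, 0 < r n := fun n => by positivity
  have hr : Tendsto r atTop (𝓝[>] 0) := tendsto_nhdsWithin_iff.2
    ⟨tendsto_one_div_add_atTop_nhds_zero_nat, .of_forall hr0⟩
  let F : ℕ → Ω × T → ℝ≥0∞ := fun n z =>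
    ν {t | dist (X z.1 t) (X z.1 z.2) ≤ r n} / μ (Metric.closedBall 0 (r n))
  have hF : ∀ n, Measurable (F n) := fun n =>
    (measurable_measure_dist_le ν hX (r n)).div_const _
  have hint : ∫⁻ z, liminf (fun n => F n z) atTop ∂(ℙ.prod ν) ≤ ∫⁻ s, ∫⁻ t, k s t ∂ν ∂ν :=
    (lintegral_liminf_le hF).trans <| liminf_le_of_le (by isBoundedDefault) fun b hb =>
      hb.exists.elim fun n hn => hn.trans <| lintegral_measure_dist_le_div_le hX <|
        h.mono fun s hs => hs.mono fun t ht => ht (r n) (hr0 n)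
  have hfin := Measure.ae_ae_of_ae_prod
    (ae_lt_top (.liminf hF) (hint.trans_lt hk.lt_top).ne)
  filter_upwards [hfin] with ω hω
  have hXω : Measurable (X ω) := hX.comp measurable_prodMk_left
  have hball : ∀ n, Measurable fun x => ν.map (X ω) (Metric.closedBall x (r n)) := fun n =>
    measurable_measure_prodMk_left
      (measurableSet_le (measurable_snd.dist measurable_fst) measurable_const :
        MeasurableSet {p : V × V | dist p.2 p.1 ≤ r n})
  refine absolutelyContinuous_of_ae_liminf_closedBall_div_lt_top hr ?_
  simp only [Measure.addHaar_closedBall_center]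
  rw [ae_map_iff hXω.aemeasurable (measurableSet_lt
    (.liminf fun n => (hball n).div_const _) measurable_const)]
  filter_upwards [hω] with s hs
  simpa only [Measure.map_apply hXω Metric.isClosed_closedBall.measurableSet] using! hs

end RandomField

section Capacity

variable {X T : Type*} [MeasurableSpace X] [MeasurableSpace T]

theorem exists_isProbabilityMeasure_energy_lt_top_of_capacity_image_pos {ρ : X → X → ℝ} {α : ℝ}
    {g : T → X} (hg : MeasurableEmbedding g) {E : Set T} (h : 0 < capacity ρ α (g '' E)) :
    ∃ ν : Measure T, IsProbabilityMeasure ν ∧ (∀ᵐ t ∂ν, t ∈ E) ∧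
      energy (fun s t => ρ (g s) (g t)) α ν < ∞ := by
  have hlt := lt_top_iff_ne_top.2 (ENNReal.inv_ne_zero.1 h.ne')
  simp only [iInf_lt_iff] at hlt
  obtain ⟨μ, hμ, hμE, hen⟩ := hlt
  have hmap : (μ.comap g).map g = μ := by
    rw [hg.map_comap, Measure.restrict_eq_self_of_ae_mem]
    exact measure_mono_null (compl_subset_compl.2 (image_subset_range g E)) hμE
  refine ⟨μ.comap g, ⟨?_⟩, ?_, ?_⟩
  · rw [← preimage_univ (f := g), ← hg.map_apply, hmap, measure_univ]
  · refine (hg.comap_apply _ _).trans (measure_mono_null ?_ hμE)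
    rintro _ ⟨t, ht, rfl⟩ ⟨s, hs, hst⟩
    exact ht (hg.injective hst ▸ hs)
  · refine lt_of_eq_of_lt ?_ hen
    conv_rhs => rw [energy, ← hmap]
    simp only [hg.lintegral_map]
    rfl

end Capacity

theorem measurableEmbedding_graph {T V : Type*} [MeasurableSpace T] [StandardBorelSpace T]
    [MeasurableSpace V] [StandardBorelSpace V] {f : T → V} (hf : Measurable f) :
    MeasurableEmbedding fun t => (t, f t) :=
  (measurable_id.prodMk hf).measurableEmbedding fun _ _ h => congrArg Prod.fst h

section Gaussian

theorem gaussianReal_closedBall_le (z : ℝ) {r : ℝ} (hr : 0 ≤ r) :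
    gaussianReal 0 1 (Metric.closedBall z r) ≤
      ENNReal.ofReal (r * Real.exp (-(z ^ 2) / 4 + r ^ 2 / 2)) := by
  rw [gaussianReal_apply _ one_ne_zero]
  have hdensity : ∀ x ∈ Metric.closedBall z r,
      gaussianPDF 0 1 x ≤ ENNReal.ofReal (2⁻¹ * Real.exp (-(z ^ 2) / 4 + r ^ 2 / 2)) := by
    intro x hx
    rw [Metric.mem_closedBall, Real.dist_eq, ← sq_le_sq₀ (abs_nonneg _) hr, sq_abs] at hx
    refine ENNReal.ofReal_le_ofReal ?_
    rw [gaussianPDFReal]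
    gcongr
    · refine Real.le_sqrt_of_sq_le ?_
      norm_num
      linarith [Real.pi_gt_three]
    · norm_num
      nlinarith [sq_nonneg (2 * x - z)]
  calc ∫⁻ x in Metric.closedBall z r, gaussianPDF 0 1 x
      ≤ ∫⁻ _ in Metric.closedBall z r,
          ENNReal.ofReal (2⁻¹ * Real.exp (-(z ^ 2) / 4 + r ^ 2 / 2)) :=
        setLIntegral_mono' Metric.isClosed_closedBall.measurableSet hdensity
    _ = ENNReal.ofReal (r * Real.exp (-(z ^ 2) / 4 + r ^ 2 / 2)) := by
        rw [setLIntegral_const, Real.volume_closedBall, ← ENNReal.ofReal_mul (by positivity)]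
        ring_nf

theorem stdGaussian_closedBall_le {ι : Type*} [Fintype ι] (z : EuclideanSpace ℝ ι) {r : ℝ}
    (hr : 0 ≤ r) :
    stdGaussian (EuclideanSpace ℝ ι) (Metric.closedBall z r) ≤ ENNReal.ofReal
      (r ^ Fintype.card ι * Real.exp (-(‖z‖ ^ 2) / 4 + Fintype.card ι * r ^ 2 / 2)) := by
  rw [← map_pi_eq_stdGaussian, Measure.map_apply (by fun_prop)
    Metric.isClosed_closedBall.measurableSet]
  calc Measure.pi (fun _ : ι => gaussianReal 0 1) (WithLp.toLp 2 ⁻¹' Metric.closedBall z r)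
      ≤ Measure.pi (fun _ : ι => gaussianReal 0 1)
          (univ.pi fun i => Metric.closedBall (z i) r) := by
        refine measure_mono fun x hx i _ => ?_
        exact (PiLp.norm_apply_le (WithLp.toLp 2 x - z) i).trans
          (by simpa [dist_eq_norm] using hx)
    _ = ∏ i, gaussianReal 0 1 (Metric.closedBall (z i) r) := Measure.pi_pi _ _
    _ ≤ ∏ i, ENNReal.ofReal (r * Real.exp (-(z i ^ 2) / 4 + r ^ 2 / 2)) :=
        Finset.prod_le_prod' fun i _ => gaussianReal_closedBall_le (z i) hr
    _ = _ := by
        rw [← ENNReal.ofReal_prod_of_nonneg fun i _ => by positivity, Finset.prod_mul_distrib,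
          ← Real.exp_sum, EuclideanSpace.norm_sq_eq]
        simp only [Finset.prod_const, Finset.card_univ, Finset.sum_add_distrib, Finset.sum_const,
          nsmul_eq_mul, ← Finset.sum_div, Finset.sum_neg_distrib, Real.norm_eq_abs, sq_abs,
          mul_div_assoc]

theorem pow_le_factorial_mul_exp_sq (d : ℕ) {x : ℝ} (hx : 0 ≤ x) :
    x ^ d ≤ d.factorial * Real.exp 2 * Real.exp (x ^ 2 / 8) := by
  have hpow := Real.pow_div_factorial_le_exp x hx d
  rw [div_le_iff₀' (by positivity)] at hpow
  rw [mul_assoc, ← Real.exp_add]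
  refine hpow.trans ?_
  gcongr
  linarith [sq_nonneg (x - 4)]

theorem exists_stdGaussian_closedBall_le (ι : Type*) [Fintype ι] :
    ∃ C > 0, ∀ (z : EuclideanSpace ℝ ι) (r : ℝ), 0 < r →
      stdGaussian (EuclideanSpace ℝ ι) (Metric.closedBall z r) ≤
        ENNReal.ofReal (C * (r / max 1 ‖z‖) ^ Fintype.card ι) := by
  set d := Fintype.card ι
  let K : ℝ := d.factorial * Real.exp 3
  have hK : 1 ≤ K := one_le_mul_of_one_le_of_one_le
    (by exact_mod_cast d.factorial_pos) (Real.one_le_exp (by norm_num))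
  refine ⟨(1 + 2 * d) ^ d * K, by positivity, fun z r hr => ?_⟩
  set ρ := max 1 ‖z‖ with hρ
  have hρ1 : 1 ≤ ρ := le_max_left _ _
  rcases le_total ρ ((1 + 2 * d) * r) with hlarge | hsmall
  · refine prob_le_one.trans (ENNReal.one_le_ofReal.2 ?_)
    calc (1 : ℝ) ≤ K * ((1 + 2 * d) * r / ρ) ^ d :=
          one_le_mul_of_one_le_of_one_le hK (one_le_pow₀ ((one_le_div (by positivity)).2 hlarge))
      _ = _ := by rw [mul_div_assoc, mul_pow]; ring
  · refine (stdGaussian_closedBall_le z hr.le).trans (ENNReal.ofReal_le_ofReal ?_)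
    have hz : ρ ^ 2 ≤ 1 + ‖z‖ ^ 2 := by
      rcases max_cases 1 ‖z‖ with h | h <;> rw [hρ, h.1] <;> nlinarith [norm_nonneg z]
    have hr2 : 4 * d * r ^ 2 ≤ ρ ^ 2 := calc
      4 * d * r ^ 2 ≤ ((1 + 2 * d) * r) ^ 2 := by nlinarith [sq_nonneg r, sq_nonneg (2 * d * r)]
      _ ≤ ρ ^ 2 := by gcongr
    have hKρ : ρ ^ d * Real.exp (1 - ρ ^ 2 / 8) ≤ K := calc
      _ ≤ d.factorial * Real.exp 2 * Real.exp (ρ ^ 2 / 8) * Real.exp (1 - ρ ^ 2 / 8) := by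
        gcongr; exact pow_le_factorial_mul_exp_sq d (by positivity)
      _ = K := by rw [mul_assoc, mul_assoc, ← Real.exp_add, ← Real.exp_add]; ring_nf; rfl
    calc r ^ d * Real.exp (-(‖z‖ ^ 2) / 4 + d * r ^ 2 / 2)
        ≤ r ^ d * Real.exp (1 - ρ ^ 2 / 8) := by gcongr; linarith
      _ = (r / ρ) ^ d * (ρ ^ d * Real.exp (1 - ρ ^ 2 / 8)) := by
        rw [div_pow]; field_simp
      _ ≤ (r / ρ) ^ d * K := by gcongr
      _ ≤ (1 + 2 * d) ^ d * ((r / ρ) ^ d * K) :=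
        le_mul_of_one_le_left (by positivity) (one_le_pow₀ (by simp))
      _ = _ := by ring

end Gaussian

/-- A process with paths on `[0, 1]`, extended to `ℝ` by its values at the nearest endpoint, so
that path continuity on `[0, 1]` becomes continuity. Time comes first, as in
`IsKolmogorovProcess`. -/
noncomputable def clampedProcess {Ω V : Type*} (B : Ω → ℝ → V) (t : ℝ) (ω : Ω) : V :=
  B ω (projIcc (0 : ℝ) 1 zero_le_one t)

theorem clampedProcess_of_mem {Ω V : Type*} (B : Ω → ℝ → V) {t : ℝ} (ht : t ∈ Icc (0 : ℝ) 1) :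
    clampedProcess B t = (B · t) := by
  ext ω
  rw [clampedProcess, projIcc_of_mem _ ht]

theorem image_clampedProcess_add {Ω V : Type*} [Add V] (B : Ω → ℝ → V) (f : ℝ → V) {E : Set ℝ}
    (hE : E ⊆ Icc 0 1) (ω : Ω) :
    (fun t => clampedProcess B t ω + f t) '' E = (fun t => B ω t + f t) '' E :=
  image_congr fun t ht => by rw [clampedProcess_of_mem B (hE ht)]

namespace IsFBM

variable {Ω : Type*} [MeasurableSpace Ω] {ℙ : Measure Ω} {H : ℝ} {d : ℕ}
  {B : Ω → ℝ → EuclideanSpace ℝ (Fin d)}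

theorem continuous_clampedProcess (hB : IsFBM ℙ H d B) (ω : Ω) :
    Continuous fun t => clampedProcess B t ω :=
  (hB.cont ω).comp_continuous (continuous_subtype_val.comp continuous_projIcc)
    fun _ => Subtype.prop _

theorem measurable_clampedProcess (hB : IsFBM ℙ H d B) (t : ℝ) :
    Measurable (clampedProcess B t) :=
  hB.meas _

theorem measurable_uncurry_clampedProcess (hB : IsFBM ℙ H d B) :
    Measurable (clampedProcess B).uncurry :=
  measurable_uncurry_of_continuous_of_measurable hB.continuous_clampedProcess
    hB.measurable_clampedProcess

theorem map_apply_sub_apply (hB : IsFBM ℙ H d B) (hH : 0 < H) {s t : ℝ} (hs : s ∈ Icc (0 : ℝ) 1)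
    (ht : t ∈ Icc (0 : ℝ) 1) (i : Fin d) :
    ℙ.map (fun ω => B ω s i - B ω t i) = (gaussianReal 0 1).map (|s - t| ^ H * ·) := by
  obtain ⟨v, hv, hmap⟩ := hB.gaussian i 2 ![s, t] ![1, -1] (by intro j; fin_cases j <;> simpa)
  have hv' : (v : ℝ) = (|s - t| ^ H) ^ 2 := by
    rw [hv, ← Real.rpow_mul_natCast (abs_nonneg _)]
    simp only [Fin.sum_univ_two, fbmCov, Matrix.cons_val_zero, Matrix.cons_val_one, sub_self,
      abs_zero, Real.zero_rpow (mul_pos two_pos hH).ne', abs_sub_comm t s, Nat.cast_ofNat,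
      mul_comm H 2]
    ring
  have hcoord : (fun ω => B ω s i - B ω t i) = fun ω => ∑ j, ![1, -1] j * B ω (![s, t] j) i := by
    ext ω
    simp [Fin.sum_univ_two, sub_eq_add_neg]
  rw [hcoord, hmap, gaussianReal_map_const_mul]
  congr 1
  · simp
  · exact NNReal.eq (by simpa using hv')

theorem map_sub (hB : IsFBM ℙ H d B) (hH : 0 < H) {s t : ℝ} (hs : s ∈ Icc (0 : ℝ) 1)
    (ht : t ∈ Icc (0 : ℝ) 1) :
    ℙ.map (fun ω => B ω s - B ω t) =
      (stdGaussian (EuclideanSpace ℝ (Fin d))).map (|s - t| ^ H • ·) := by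
  have hBm : ∀ u, Measurable fun ω => B ω u := hB.meas
  have hind : iIndepFun (fun i ω => B ω s i - B ω t i) ℙ :=
    hB.indep.comp (fun _ (g : ℝ → ℝ) => g s - g t) fun _ => by fun_prop
  have hpi : ℙ.map (fun ω i => B ω s i - B ω t i)
      = (Measure.pi fun _ : Fin d => gaussianReal 0 1).map fun x i => |s - t| ^ H * x i := by
    rw [hind.map_fun_eq_pi_map (fun _ => by fun_prop), Measure.pi_map_pi (fun _ => by fun_prop)]
    simp only [hB.map_apply_sub_apply hH hs ht]
  rw [← map_pi_eq_stdGaussian, Measure.map_map (by fun_prop) (by fun_prop)]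
  have hmap := congrArg (Measure.map (WithLp.toLp 2)) hpi
  rwa [Measure.map_map (by fun_prop) (by fun_prop),
    Measure.map_map (by fun_prop) (by fun_prop)] at hmap

end IsFBM

theorem radialKernel_natCast {d : ℕ} (hd : 0 < d) (x : ℝ) :
    radialKernel d x = (ENNReal.ofReal x ^ d)⁻¹ := by
  rw [radialKernel, if_pos (by exact_mod_cast hd), ENNReal.rpow_neg, ENNReal.rpow_natCast]

theorem stdGaussian_map_smul_closedBall {ι : Type*} [Fintype ι] {σ : ℝ} (hσ : 0 < σ)
    (z : EuclideanSpace ℝ ι) (r : ℝ) :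
    (stdGaussian (EuclideanSpace ℝ ι)).map (σ • ·) (Metric.closedBall z r) =
      stdGaussian (EuclideanSpace ℝ ι) (Metric.closedBall (σ⁻¹ • z) (r / σ)) := by
  rw [Measure.map_apply (by fun_prop) Metric.isClosed_closedBall.measurableSet,
    preimage_smul₀ hσ.ne', smul_closedBall' (inv_ne_zero hσ.ne')]
  simp [abs_of_pos hσ, div_eq_inv_mul]

theorem exists_stdGaussian_map_smul_closedBall_le {d : ℕ} (hd : 0 < d) :
    ∃ C ≠ ∞, ∀ (σ : ℝ) (z : EuclideanSpace ℝ (Fin d)) (r : ℝ), 0 ≤ σ → (σ = 0 → z = 0) → 0 < r →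
      (stdGaussian (EuclideanSpace ℝ (Fin d))).map (σ • ·) (Metric.closedBall z r) ≤
        C * radialKernel d (max σ ‖z‖) *
          volume (Metric.closedBall (0 : EuclideanSpace ℝ (Fin d)) r) := by
  obtain ⟨C, hC, hball⟩ := exists_stdGaussian_closedBall_le (Fin d)
  let V := volume (Metric.closedBall (0 : EuclideanSpace ℝ (Fin d)) 1)
  have hV0 : V ≠ 0 := (Metric.measure_closedBall_pos volume _ one_pos).ne'
  have hV : V ≠ ∞ := measure_closedBall_lt_top.ne
  refine ⟨ENNReal.ofReal C / V, ENNReal.div_ne_top ofReal_ne_top hV0, fun σ z r hσ hz hr => ?_⟩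
  rw [radialKernel_natCast hd]
  rcases hσ.eq_or_lt with rfl | hσ
  · -- The law is the point mass at `0`; the bound is trivial as the kernel is infinite at `z = 0`.
    have hCV : ENNReal.ofReal C / V ≠ 0 := (ENNReal.div_pos (ENNReal.ofReal_pos.2 hC).ne' hV).ne'
    rw [hz rfl, norm_zero, max_self, ofReal_zero, zero_pow hd.ne', ENNReal.inv_zero,
      ENNReal.mul_top hCV, ENNReal.top_mul (Metric.measure_closedBall_pos volume _ hr).ne']
    exact le_top
  · have hρ : 0 < max σ ‖z‖ := lt_max_of_lt_left hσ
    have hscale : r / σ / max 1 ‖σ⁻¹ • z‖ = r / max σ ‖z‖ := by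
      rw [norm_smul, norm_inv, Real.norm_of_nonneg hσ.le, div_div, mul_max_of_nonneg _ _ hσ.le,
        mul_one, mul_inv_cancel_left₀ hσ.ne']
    rw [stdGaussian_map_smul_closedBall hσ, Measure.addHaar_closedBall' volume _ hr.le,
      finrank_euclideanSpace_fin]
    calc _ ≤ ENNReal.ofReal (C * (r / max σ ‖z‖) ^ d) := by
          simpa only [hscale, Fintype.card_fin] using hball (σ⁻¹ • z) (r / σ) (by positivity)
      _ = ENNReal.ofReal C / V * V *
          (ENNReal.ofReal (r ^ d) * (ENNReal.ofReal (max σ ‖z‖) ^ d)⁻¹) := by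
          rw [ENNReal.div_mul_cancel hV0 hV, ENNReal.ofReal_mul hC.le, div_pow,
            ENNReal.ofReal_div_of_pos (by positivity), ENNReal.ofReal_pow hρ.le, div_eq_mul_inv]
      _ = _ := by ring

namespace IsFBM

variable {Ω : Type*} [MeasurableSpace Ω] {ℙ : Measure Ω} {H : ℝ} {d : ℕ}
  {B : Ω → ℝ → EuclideanSpace ℝ (Fin d)}

theorem exists_measure_dist_add_le (hB : IsFBM ℙ H d B) (hH : 0 < H) (hd : 0 < d) :
    ∃ C ≠ ∞, ∀ s ∈ Icc (0 : ℝ) 1, ∀ t ∈ Icc (0 : ℝ) 1, ∀ x y : EuclideanSpace ℝ (Fin d),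
      (s = t → x = y) → ∀ r > 0, ℙ {ω | dist (B ω t + y) (B ω s + x) ≤ r} ≤
        C * radialKernel d (parabolicDist H (s, x) (t, y)) *
          volume (Metric.closedBall (0 : EuclideanSpace ℝ (Fin d)) r) := by
  obtain ⟨C, hC, hball⟩ := exists_stdGaussian_map_smul_closedBall_le hd
  refine ⟨C, hC, fun s hs t ht x y hxy r hr => ?_⟩
  have hBm : ∀ u, Measurable fun ω => B ω u := hB.meas
  have hset : {ω | dist (B ω t + y) (B ω s + x) ≤ r} =
      (fun ω => B ω s - B ω t) ⁻¹' Metric.closedBall (y - x) r := by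
    ext ω
    simp only [mem_ofPred_eq, mem_preimage, Metric.mem_closedBall, dist_eq_norm]
    rw [norm_sub_rev]
    congr! 2
    abel
  have hdist : parabolicDist H (s, x) (t, y) = max (|s - t| ^ H) ‖y - x‖ := by
    rw [parabolicDist, dist_comm, dist_eq_norm]
  rw [hset, ← Measure.map_apply (by fun_prop) Metric.isClosed_closedBall.measurableSet,
    hB.map_sub hH hs ht, hdist]
  refine hball _ _ _ (by positivity) (fun h => ?_) hr
  rw [hxy (by simpa [Real.rpow_eq_zero_iff_of_nonneg, hH.ne', sub_eq_zero] using h), sub_self]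

theorem ae_volume_image_add_pos [SFinite ℙ] (hB : IsFBM ℙ H d B) (hH : 0 < H) (hd : 0 < d)
    {f : ℝ → EuclideanSpace ℝ (Fin d)} (hf : Measurable f) {E : Set ℝ} (hE : E ⊆ Icc 0 1)
    (hcap : 0 < capacity (parabolicDist H) d ((fun t => (t, f t)) '' E)) :
    ∀ᵐ ω ∂ℙ, 0 < volume ((fun t => B ω t + f t) '' E) := by
  obtain ⟨ν, hν, hνE, henergy⟩ := exists_isProbabilityMeasure_energy_lt_top_of_capacity_image_pos
    (measurableEmbedding_graph hf) hcap
  obtain ⟨C, hC, hball⟩ := hB.exists_measure_dist_add_le hH hd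
  have hX : Measurable (fun ω t => clampedProcess B t ω + f t).uncurry :=
    (hB.measurable_uncurry_clampedProcess.comp measurable_swap).add (hf.comp measurable_snd)
  have hac := ae_map_absolutelyContinuous_of_measure_dist_le (ℙ := ℙ) (ν := ν) volume hX
    (k := fun s t => C * radialKernel d (parabolicDist H (s, f s) (t, f t)))
    (by simp only [lintegral_const_mul' _ _ hC]; exact (ENNReal.mul_lt_top hC.lt_top henergy).ne)
    (by
      filter_upwards [hνE] with s hs
      filter_upwards [hνE] with t ht r hr
      simp only [clampedProcess_of_mem B (hE hs), clampedProcess_of_mem B (hE ht)]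
      exact hball s (hE hs) t (hE ht) _ _ (congrArg f) r hr)
  filter_upwards [hac] with ω hω
  rw [← image_clampedProcess_add B f hE]
  exact measure_image_pos_of_map_absolutelyContinuous
    (hX.comp measurable_prodMk_left).aemeasurable hω
    (frequently_ae_mem_iff.1 hνE.frequently)

theorem isKolmogorovProcess_clampedProcess (hB : IsFBM ℙ H d B) (hH : 0 < H) {p : ℝ} (hp : 0 < p) :
    ∃ M, IsKolmogorovProcess (clampedProcess B) ℙ p (H * p) M := by
  let γ := stdGaussian (EuclideanSpace ℝ (Fin d))
  have hmoment : ∫⁻ x, ‖x‖ₑ ^ p ∂γ < ∞ := by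
    have := lintegral_rpow_enorm_lt_top_of_eLpNorm_lt_top (p := ENNReal.ofReal p)
      (by simpa) ofReal_ne_top
      (ProbabilityTheory.IsGaussian.memLp_id γ _ ofReal_ne_top).eLpNorm_lt_top
    simpa [hp.le] using this
  refine ⟨(∫⁻ x, ‖x‖ₑ ^ p ∂γ).toNNReal, .mk_of_secondCountableTopology
    hB.measurable_clampedProcess (fun s t => ?_) hp (mul_pos hH hp)⟩
  set s' := projIcc (0 : ℝ) 1 zero_le_one s
  set t' := projIcc (0 : ℝ) 1 zero_le_one t
  have hdist : |(s' : ℝ) - t'| ≤ |s - t| := abs_projIcc_sub_projIcc zero_le_one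
  have hBm : ∀ u, Measurable fun ω => B ω u := hB.meas
  calc ∫⁻ ω, edist (clampedProcess B s ω) (clampedProcess B t ω) ^ p ∂ℙ
      = ∫⁻ x, ‖x‖ₑ ^ p ∂ℙ.map (fun ω => B ω s' - B ω t') := by
        rw [lintegral_map (by fun_prop) (by fun_prop)]
        simp only [edist_eq_enorm_sub]; rfl
    _ = ‖|(s' : ℝ) - t'| ^ H‖ₑ ^ p * ∫⁻ x, ‖x‖ₑ ^ p ∂γ := by
        rw [hB.map_sub hH s'.2 t'.2, lintegral_map (by fun_prop) (by fun_prop)]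
        simp only [enorm_smul, ENNReal.mul_rpow_of_nonneg _ _ hp.le]
        rw [lintegral_const_mul _ (by fun_prop)]
    _ ≤ edist s t ^ (H * p) * ∫⁻ x, ‖x‖ₑ ^ p ∂γ := by
        rw [ENNReal.rpow_mul, edist_dist, Real.dist_eq, Real.enorm_of_nonneg (by positivity),
          ENNReal.ofReal_rpow_of_nonneg (abs_nonneg _) hH.le]
        gcongr
    _ = _ := by rw [mul_comm, ENNReal.coe_toNNReal hmoment.ne]

end IsFBM

section Chaining

variable {V : Type*} [PseudoEMetricSpace V]

/-- The weighted sum of the `p`-th powers of the dyadic increments of `g` over `[0, 1]`: a quantity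
with computable expectation that controls the oscillation of `g` on `[0, 1)`. -/
noncomputable def dyadicVariation (p : ℝ) (g : ℝ → V) : ℝ≥0∞ :=
  ∑' k : ℕ, 2 ^ k * ∑ j ∈ Finset.range (2 ^ k), edist (g (j / 2 ^ k)) (g ((j + 1) / 2 ^ k)) ^ p

theorem edist_dyadic_le_mul_dyadicVariation {p : ℝ} (hp : 0 < p) (g : ℝ → V) {j k : ℕ}
    (hj : j < 2 ^ k) :
    edist (g (j / 2 ^ k)) (g ((j + 1) / 2 ^ k)) ≤
      (2 ^ (-p⁻¹)) ^ k * dyadicVariation p g ^ p⁻¹ := by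
  set D := edist (g (j / 2 ^ k)) (g ((j + 1) / 2 ^ k))
  have hle : 2 ^ k * D ^ p ≤ dyadicVariation p g := calc
    2 ^ k * D ^ p ≤ 2 ^ k * ∑ j ∈ Finset.range (2 ^ k),
        edist (g (j / 2 ^ k)) (g ((j + 1) / 2 ^ k)) ^ p := by
      gcongr
      exact Finset.single_le_sum_of_canonicallyOrdered
        (f := fun j : ℕ => edist (g (j / 2 ^ k)) (g ((j + 1) / 2 ^ k)) ^ p) (Finset.mem_range.2 hj)
    _ ≤ _ := ENNReal.le_tsum k
  have hcancel : ((2 : ℝ≥0∞) ^ (-p⁻¹)) ^ k * (2 ^ k) ^ p⁻¹ = 1 := by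
    rw [← ENNReal.rpow_mul_natCast, ← ENNReal.rpow_natCast_mul,
      ← ENNReal.rpow_add _ _ two_ne_zero ofNat_ne_top, neg_mul, mul_comm, neg_add_cancel,
      ENNReal.rpow_zero]
  calc D = (2 ^ (-p⁻¹)) ^ k * (2 ^ k * D ^ p) ^ p⁻¹ := by
        rw [ENNReal.mul_rpow_of_nonneg _ _ (by positivity), ENNReal.rpow_rpow_inv hp.ne',
          ← mul_assoc, hcancel, one_mul]
    _ ≤ _ := by gcongr

theorem floor_two_mul {x : ℝ} (hx : 0 ≤ x) :
    ⌊2 * x⌋₊ = 2 * ⌊x⌋₊ ∨ ⌊2 * x⌋₊ = 2 * ⌊x⌋₊ + 1 := by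
  have hle : 2 * ⌊x⌋₊ ≤ ⌊2 * x⌋₊ := Nat.le_floor (by push_cast; linarith [Nat.floor_le hx])
  have hlt : ⌊2 * x⌋₊ < 2 * ⌊x⌋₊ + 2 :=
    (Nat.floor_lt (by positivity)).2 (by push_cast; linarith [Nat.lt_floor_add_one x])
  lia

theorem edist_floor_succ_le_mul_dyadicVariation {p : ℝ} (hp : 0 < p) (g : ℝ → V) {x : ℝ}
    (hx : x ∈ Ico (0 : ℝ) 1) (k : ℕ) :
    edist (g (⌊2 ^ k * x⌋₊ / 2 ^ k)) (g (⌊2 ^ (k + 1) * x⌋₊ / 2 ^ (k + 1))) ≤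
      (2 ^ (-p⁻¹)) ^ (k + 1) * dyadicVariation p g ^ p⁻¹ := by
  have hx0 : 0 ≤ 2 ^ k * x := mul_nonneg (by positivity) hx.1
  have hfloor : (⌊2 ^ k * x⌋₊ : ℝ) / 2 ^ k = (2 * ⌊2 ^ k * x⌋₊ : ℕ) / 2 ^ (k + 1) := by
    push_cast; rw [pow_succ]; field_simp
  have hlt : ⌊2 ^ k * x⌋₊ < 2 ^ k := (Nat.floor_lt hx0).2
    (by push_cast; exact mul_lt_of_lt_one_right (by positivity) hx.2)
  rw [hfloor, pow_succ' (2 : ℝ) k, mul_assoc]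
  rcases floor_two_mul hx0 with h | h <;> rw [h]
  · simp
  · rw [← pow_succ']
    exact_mod_cast edist_dyadic_le_mul_dyadicVariation hp g (k := k + 1)
      (j := 2 * ⌊2 ^ k * x⌋₊) (by lia)

theorem edist_zero_le_mul_dyadicVariation {p : ℝ} (hp : 0 < p) {g : ℝ → V} (hg : Continuous g)
    {x : ℝ} (hx : x ∈ Ico (0 : ℝ) 1) :
    edist (g 0) (g x) ≤ (∑' k : ℕ, (2 ^ (-p⁻¹)) ^ k) * dyadicVariation p g ^ p⁻¹ := by
  have hlim : Tendsto (fun k : ℕ => (⌊2 ^ k * x⌋₊ : ℝ) / 2 ^ k) atTop (𝓝 x) :=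
    ((tendsto_nat_floor_mul_div_atTop hx.1).comp
      (tendsto_pow_atTop_atTop_of_one_lt one_lt_two)).congr fun k => by
        simp only [Function.comp, mul_comm]
  have hchain := edist_le_tsum_of_edist_le_of_tendsto₀ _
    (edist_floor_succ_le_mul_dyadicVariation hp g hx) ((hg.tendsto x).comp hlim)
  rw [ENNReal.tsum_mul_right] at hchain
  simp only [pow_zero, one_mul, Nat.floor_eq_zero.2 hx.2, Nat.cast_zero, zero_div] at hchain
  exact hchain.trans (mul_le_mul_left
    (ENNReal.tsum_comp_le_tsum_of_injective (add_left_injective 1) _) _)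

theorem tsum_two_rpow_neg_pow_ne_top {a : ℝ} (ha : 0 < a) :
    ∑' k : ℕ, ((2 : ℝ≥0∞) ^ (-a)) ^ k ≠ ∞ := by
  rw [ENNReal.tsum_geometric]
  exact ENNReal.inv_ne_top.2 (tsub_pos_of_lt
    (ENNReal.rpow_lt_one_of_one_lt_of_neg one_lt_two (neg_neg_of_pos ha))).ne'

variable {Ω : Type*} [MeasurableSpace Ω] {P : Measure Ω} {p q : ℝ} {M : NNReal} {X : ℝ → Ω → V}

theorem measurable_dyadicVariation_comp (hX : IsKolmogorovProcess X P p q M) (φ : ℝ → ℝ) :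
    Measurable fun ω => dyadicVariation p fun x => X (φ x) ω :=
  .tsum fun _ => (Finset.measurable_sum _ fun _ _ => hX.measurable_edist.pow_const p).const_mul _

theorem lintegral_dyadicVariation_comp_affine_le (hX : IsKolmogorovProcess X P p q M) (u : ℝ)
    {h : ℝ} (hh : 0 ≤ h) :
    ∫⁻ ω, dyadicVariation p (fun x => X (u + h * x) ω) ∂P ≤
      M * (∑' k : ℕ, (2 ^ (-(q - 2))) ^ k) * ENNReal.ofReal h ^ q := by
  have hincr : ∀ s t, Measurable fun ω => edist (X s ω) (X t ω) ^ p :=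
    fun _ _ => hX.measurable_edist.pow_const p
  have hsum : ∀ (k : ℕ), Measurable fun ω => ∑ j ∈ Finset.range (2 ^ k),
      edist (X (u + h * (j / 2 ^ k)) ω) (X (u + h * ((j + 1) / 2 ^ k)) ω) ^ p :=
    fun k => Finset.measurable_sum _ fun _ _ => hincr _ _
  have hstep : ∀ j k : ℕ, edist (u + h * (j / 2 ^ k)) (u + h * ((j + 1) / 2 ^ k)) =
      ENNReal.ofReal h * (2 ^ k)⁻¹ := fun j k => by
    have hdiff : u + h * (j / 2 ^ k) - (u + h * ((j + 1) / 2 ^ k)) = -(h * (2 ^ k)⁻¹) := by ring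
    rw [edist_dist, Real.dist_eq, hdiff, abs_neg, abs_of_nonneg (by positivity),
      ENNReal.ofReal_mul hh, ENNReal.ofReal_inv_of_pos (by positivity),
      ENNReal.ofReal_pow zero_le_two, ofReal_ofNat]
  have hscale : ∀ k : ℕ, (2 : ℝ≥0∞) ^ k * 2 ^ k * ((2 ^ k)⁻¹) ^ q =
      (2 ^ (-(q - 2))) ^ k := fun k => by
    rw [ENNReal.inv_rpow, ← ENNReal.rpow_neg, ← ENNReal.rpow_natCast, ← ENNReal.rpow_mul,
      ← ENNReal.rpow_mul_natCast, ← ENNReal.rpow_add _ _ two_ne_zero ofNat_ne_top,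
      ← ENNReal.rpow_add _ _ two_ne_zero ofNat_ne_top]
    ring_nf
  unfold dyadicVariation
  rw [lintegral_tsum fun k => ((hsum k).const_mul _).aemeasurable, mul_right_comm,
    ← ENNReal.tsum_mul_left]
  refine ENNReal.tsum_le_tsum fun k => ?_
  rw [lintegral_const_mul _ (hsum k), lintegral_finsetSum _ fun _ _ => hincr _ _]
  calc _ ≤ 2 ^ k * ∑ j ∈ Finset.range (2 ^ k), M * (ENNReal.ofReal h * (2 ^ k)⁻¹) ^ q := by
        gcongr with j _
        exact hstep j k ▸ hX.kolmogorovCondition _ _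
    _ = M * ENNReal.ofReal h ^ q * (2 ^ k * 2 ^ k * ((2 ^ k)⁻¹) ^ q) := by
        rw [Finset.sum_const, Finset.card_range, nsmul_eq_mul, Nat.cast_pow, Nat.cast_ofNat,
          ENNReal.mul_rpow_of_nonneg _ _ hX.q_pos.le]
        ring
    _ = _ := by rw [hscale]

theorem exists_lintegral_oscillation_rpow_le (hX : IsKolmogorovProcess X P p q M)
    (hcont : ∀ ω, Continuous fun t => X t ω) (hq : 2 < q) :
    ∃ C ≠ ∞, ∀ u h : ℝ, 0 < h → ∃ W : Ω → ℝ≥0∞, Measurable W ∧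
      (∀ ω, ∀ s ∈ Ico u (u + h), edist (X u ω) (X s ω) ≤ W ω) ∧
      ∫⁻ ω, W ω ^ p ∂P ≤ C * ENNReal.ofReal h ^ q := by
  let c : ℝ≥0∞ := ∑' k : ℕ, (2 ^ (-p⁻¹)) ^ k
  have hc : c ≠ ∞ := tsum_two_rpow_neg_pow_ne_top (inv_pos.2 hX.p_pos)
  let S : ℝ≥0∞ := ∑' k : ℕ, (2 ^ (-(q - 2))) ^ k
  have hS : S ≠ ∞ := tsum_two_rpow_neg_pow_ne_top (sub_pos.2 hq)
  refine ⟨c ^ p * (M * S), by finiteness [hX.p_pos], fun u h hh => ?_⟩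
  let Z : Ω → ℝ≥0∞ := fun ω => dyadicVariation p fun x => X (u + h * x) ω
  have hZ : Measurable Z := measurable_dyadicVariation_comp hX _
  refine ⟨fun ω => c * Z ω ^ p⁻¹, (hZ.pow_const _).const_mul _, fun ω s hs => ?_, ?_⟩
  · have hx : (s - u) / h ∈ Ico (0 : ℝ) 1 :=
      ⟨div_nonneg (sub_nonneg.2 hs.1) hh.le, (div_lt_one hh).2 (by linarith [hs.2])⟩
    have hg : Continuous fun x => X (u + h * x) ω := (hcont ω).comp (by fun_prop)
    simpa only [mul_zero, add_zero, mul_div_cancel₀ _ hh.ne', add_sub_cancel] using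
      edist_zero_le_mul_dyadicVariation hX.p_pos hg hx
  · simp only [ENNReal.mul_rpow_of_nonneg _ _ hX.p_pos.le, ENNReal.rpow_inv_rpow hX.p_pos.ne']
    rw [lintegral_const_mul _ hZ, mul_assoc]
    gcongr
    exact lintegral_dyadicVariation_comp_affine_le hX u hh.le

theorem exists_lintegral_oscillation_rpow_le_ofReal_rpow {H : ℝ}
    (hX : IsKolmogorovProcess X P p (H * p) M) (hcont : ∀ ω, Continuous fun t => X t ω)
    (hH : 0 < H) (hHp : 2 < H * p) :
    ∃ C ≠ ∞, ∀ u r : ℝ, 0 < r → ∃ W : Ω → ℝ≥0∞, Measurable W ∧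
      (∀ ω, ∀ s, |s - u| ^ H < r → edist (X (u - r ^ H⁻¹) ω) (X s ω) ≤ W ω) ∧
      ∫⁻ ω, W ω ^ p ∂P ≤ C * ENNReal.ofReal r ^ p := by
  obtain ⟨C, hC, hosc⟩ := exists_lintegral_oscillation_rpow_le hX hcont hHp
  refine ⟨C * 2 ^ (H * p), by finiteness, fun u r hr => ?_⟩
  set τ := r ^ H⁻¹
  have hτ : 0 < τ := by positivity
  have hτH : τ ^ H = r := Real.rpow_inv_rpow hr.le hH.ne'
  obtain ⟨W, hWm, hW, hWint⟩ := hosc (u - τ) (2 * τ) (by positivity)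
  refine ⟨W, hWm, fun ω s hs => hW ω s ?_, hWint.trans_eq ?_⟩
  · have hsτ : |s - u| < τ := (Real.rpow_lt_rpow_iff (abs_nonneg _) hτ.le hH).1 (hτH ▸ hs)
    constructor <;> linarith [abs_lt.1 hsτ]
  · rw [ENNReal.ofReal_mul zero_le_two, ENNReal.mul_rpow_of_nonneg _ _ (by positivity),
      ENNReal.rpow_mul (ENNReal.ofReal τ), ENNReal.ofReal_rpow_of_nonneg hτ.le hH.le, hτH,
      ofReal_ofNat, mul_assoc]

end Chaining

section HausdorffMeasureZero

theorem exists_cover_of_hMeasure_lt {α : Type*} {ρ : α → α → ℝ} {β : ℝ} {G : Set α} {ε : ℝ≥0∞}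
    (h : hMeasure ρ β G < ε) {δ : ℝ} (hδ : 0 < δ) :
    ∃ (c : ℕ → α) (r : ℕ → ℝ), (∀ n, 0 < r n ∧ r n ≤ δ) ∧ G ⊆ ⋃ n, {y | ρ y (c n) < r n} ∧
      ∑' n, ENNReal.ofReal ((2 * r n) ^ β) < ε := by
  have hlt := (le_iSup₂_of_le δ hδ le_rfl).trans_lt h
  simpa only [iInf_lt_iff, exists_prop] using hlt

variable {Ω : Type*} [MeasurableSpace Ω] {P : Measure Ω}

theorem ae_eq_zero_of_forall_exists_lintegral_le {F : Ω → ℝ≥0∞}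
    (h : ∀ ε ≠ 0, ∃ Y : Ω → ℝ≥0∞, Measurable Y ∧ F ≤ Y ∧ ∫⁻ ω, Y ω ∂P ≤ ε) : F =ᵐ[P] 0 := by
  choose Y hYm hFY hY using fun n : ℕ => h ((n : ℝ≥0∞)⁻¹) (by simp)
  have hzero : ∫⁻ ω, ⨅ n, Y n ω ∂P = 0 := le_antisymm (ge_of_tendsto'
    ENNReal.tendsto_inv_nat_nhds_zero fun n => (lintegral_mono fun ω => iInf_le _ n).trans (hY n))
    zero_le
  filter_upwards [(lintegral_eq_zero_iff (.iInf hYm)).1 hzero] with ω hω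
  exact le_antisymm ((le_iInf fun n => hFY n ω).trans hω.le) zero_le

theorem ae_measure_image_eq_zero_of_hMeasure_eq_zero {α V : Type*} [MeasurableSpace V]
    {μ : Measure V} {ρ : α → α → ℝ} {β : ℝ} {F : Ω → α → V} {A : ℝ≥0∞} (hA : A ≠ ∞)
    (hball : ∀ (c : α) (r : ℝ), 0 < r → ∃ Y : Ω → ℝ≥0∞, Measurable Y ∧
      (∀ ω, μ (F ω '' {y | ρ y c < r}) ≤ Y ω) ∧ ∫⁻ ω, Y ω ∂P ≤ A * ENNReal.ofReal ((2 * r) ^ β))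
    {G : Set α} (hG : hMeasure ρ β G = 0) :
    ∀ᵐ ω ∂P, μ (F ω '' G) = 0 := by
  refine ae_eq_zero_of_forall_exists_lintegral_le fun ε hε => ?_
  obtain ⟨η, hη, hηε⟩ := ENNReal.exists_nnreal_pos_mul_lt hA hε
  obtain ⟨c, r, hr, hcover, hsum⟩ :=
    exists_cover_of_hMeasure_lt (hG ▸ ENNReal.coe_pos.2 hη) one_pos
  choose Y hYm hY hYint using fun n => hball (c n) (r n) (hr n).1
  refine ⟨fun ω => ∑' n, Y n ω, .tsum hYm, fun ω => ?_, ?_⟩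
  · calc μ (F ω '' G) ≤ μ (⋃ n, F ω '' {y | ρ y (c n) < r n}) := by
          rw [← image_iUnion]; exact measure_mono (image_mono hcover)
      _ ≤ ∑' n, μ (F ω '' {y | ρ y (c n) < r n}) := measure_iUnion_le _
      _ ≤ ∑' n, Y n ω := ENNReal.tsum_le_tsum fun n => hY n ω
  · calc ∫⁻ ω, ∑' n, Y n ω ∂P ≤ ∑' n, A * ENNReal.ofReal ((2 * r n) ^ β) := by
          rw [lintegral_tsum fun n => (hYm n).aemeasurable]
          exact ENNReal.tsum_le_tsum hYint
      _ ≤ η * A := by rw [ENNReal.tsum_mul_left, mul_comm]; gcongr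
      _ ≤ ε := hηε.le

end HausdorffMeasureZero

theorem measure_le_of_edist_le {V : Type*} [NormedAddCommGroup V] [NormedSpace ℝ V]
    [MeasurableSpace V] [BorelSpace V] [FiniteDimensional ℝ V] (μ : Measure V) [μ.IsAddHaarMeasure]
    {S : Set V} {y : V} {R : ℝ≥0∞} (h : ∀ x ∈ S, edist y x ≤ R) :
    μ S ≤ μ (Metric.closedBall 0 1) * R ^ Module.finrank ℝ V := by
  rcases eq_or_ne R ∞ with rfl | hR
  · rcases subsingleton_or_nontrivial V with hV | hV
    · rw [Module.finrank_zero_of_subsingleton, pow_zero, mul_one]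
      exact measure_mono fun x _ => by simp [Subsingleton.elim x 0]
    · rw [ENNReal.top_pow Module.finrank_pos.ne',
        ENNReal.mul_top (Metric.measure_closedBall_pos μ _ one_pos).ne']
      exact le_top
  · have hsub : S ⊆ Metric.closedBall y R.toReal := fun x hx => by
      rw [Metric.mem_closedBall', dist_edist]
      exact ENNReal.toReal_mono hR (h x hx)
    calc μ S ≤ μ (Metric.closedBall y R.toReal) := measure_mono hsub
      _ = _ := by
        rw [Measure.addHaar_closedBall' μ _ toReal_nonneg, ENNReal.ofReal_pow toReal_nonneg,
          ENNReal.ofReal_toReal hR, mul_comm]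

theorem volume_image_parabolicBall_le {H : ℝ} {d : ℕ} {g : ℝ → EuclideanSpace ℝ (Fin d)}
    (c : ℝ × EuclideanSpace ℝ (Fin d)) {r : ℝ} {x : EuclideanSpace ℝ (Fin d)} {w : ℝ≥0∞}
    (hw : ∀ s, |s - c.1| ^ H < r → edist x (g s) ≤ w) :
    volume ((fun y => g y.1 + y.2) '' {y | parabolicDist H y c < r}) ≤
      volume (Metric.closedBall (0 : EuclideanSpace ℝ (Fin d)) 1) *
        (w + ENNReal.ofReal r) ^ d := by
  have hdist : ∀ z ∈ (fun y => g y.1 + y.2) '' {y | parabolicDist H y c < r},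
      edist (x + c.2) z ≤ w + ENNReal.ofReal r := by
    rintro _ ⟨⟨s, z⟩, hsz, rfl⟩
    obtain ⟨hs, hz⟩ : |s - c.1| ^ H < r ∧ dist z c.2 < r := max_lt_iff.1 hsz
    refine (edist_add_add_le _ _ _ _).trans (add_le_add (hw s hs) ?_)
    rw [edist_comm, edist_dist]
    exact ENNReal.ofReal_le_ofReal hz.le
  simpa only [finrank_euclideanSpace_fin] using measure_le_of_edist_le volume hdist

theorem add_pow_le_mul_one_add_div_rpow {w ρ : ℝ≥0∞} (hρ : ρ ≠ 0) (hρ' : ρ ≠ ∞) {d : ℕ} {p : ℝ}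
    (hdp : d ≤ p) : (w + ρ) ^ d ≤ 2 ^ d * ρ ^ d * (1 + w ^ p / ρ ^ p) := by
  have hp : 0 ≤ p := d.cast_nonneg.trans hdp
  rw [← ENNReal.div_rpow_of_nonneg _ _ hp]
  set x := w / ρ
  have hw : w + ρ = ρ * (x + 1) := by rw [mul_add, ENNReal.mul_div_cancel hρ hρ', mul_one]
  have hx : (x + 1) ^ d ≤ 2 ^ d * (1 + x ^ p) := by
    rcases le_total x 1 with h | h
    · calc (x + 1) ^ d ≤ (1 + 1) ^ d := by gcongr
        _ ≤ 2 ^ d * (1 + x ^ p) := by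
          rw [one_add_one_eq_two]; exact le_mul_of_one_le_right' le_self_add
    · calc (x + 1) ^ d ≤ (x + x) ^ d := by gcongr
        _ = 2 ^ d * x ^ (d : ℝ) := by rw [← two_mul, mul_pow, ENNReal.rpow_natCast]
        _ ≤ 2 ^ d * (1 + x ^ p) := by
          gcongr
          exact (ENNReal.rpow_le_rpow_of_exponent_le h hdp).trans le_add_self
  calc (w + ρ) ^ d = ρ ^ d * (x + 1) ^ d := by rw [hw, mul_pow]
    _ ≤ ρ ^ d * (2 ^ d * (1 + x ^ p)) := by gcongr
    _ = _ := by ring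

section KolmogorovProcess

variable {Ω : Type*} [MeasurableSpace Ω] {P : Measure Ω} [IsFiniteMeasure P] {H p : ℝ} {d : ℕ}
  {M : NNReal} {X : ℝ → Ω → EuclideanSpace ℝ (Fin d)}

theorem exists_lintegral_volume_image_parabolicBall_le (hX : IsKolmogorovProcess X P p (H * p) M)
    (hcont : ∀ ω, Continuous fun t => X t ω) (hH : 0 < H) (hdp : d ≤ p) (hHp : 2 < H * p) :
    ∃ A ≠ ∞, ∀ (c : ℝ × EuclideanSpace ℝ (Fin d)) (r : ℝ), 0 < r →
      ∃ Y : Ω → ℝ≥0∞, Measurable Y ∧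
        (∀ ω, volume ((fun y => X y.1 ω + y.2) '' {y | parabolicDist H y c < r}) ≤ Y ω) ∧
        ∫⁻ ω, Y ω ∂P ≤ A * ENNReal.ofReal r ^ d := by
  obtain ⟨C, hC, hosc⟩ := exists_lintegral_oscillation_rpow_le_ofReal_rpow hX hcont hH hHp
  let κ := volume (Metric.closedBall (0 : EuclideanSpace ℝ (Fin d)) 1)
  have hκ : κ ≠ ∞ := measure_closedBall_lt_top.ne
  refine ⟨κ * 2 ^ d * (P univ + C), by finiteness, fun c r hr => ?_⟩
  set ρ := ENNReal.ofReal r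
  have hρ : ρ ≠ 0 := (ENNReal.ofReal_pos.2 hr).ne'
  obtain ⟨W, hWm, hW, hWint⟩ := hosc c.1 r hr
  refine ⟨fun ω => κ * (2 ^ d * ρ ^ d * (1 + W ω ^ p / ρ ^ p)), by fun_prop, fun ω => ?_, ?_⟩
  · exact (volume_image_parabolicBall_le c (hW ω)).trans
      (mul_le_mul_right (add_pow_le_mul_one_add_div_rpow hρ ofReal_ne_top hdp) _)
  · have hdiv : (∫⁻ ω, W ω ^ p ∂P) * (ρ ^ p)⁻¹ ≤ C :=
      ENNReal.div_le_of_le_mul hWint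
    rw [lintegral_const_mul _ (by fun_prop), lintegral_const_mul _ (by fun_prop),
      lintegral_add_left measurable_const, lintegral_const, one_mul]
    simp only [div_eq_mul_inv]
    rw [lintegral_mul_const _ (by fun_prop)]
    calc _ ≤ κ * (2 ^ d * ρ ^ d * (P univ + C)) := by gcongr
      _ = _ := by ring

theorem ae_volume_image_eq_zero_of_hMeasure_eq_zero (hX : IsKolmogorovProcess X P p (H * p) M)
    (hcont : ∀ ω, Continuous fun t => X t ω) (hH : 0 < H) (hdp : d ≤ p) (hHp : 2 < H * p)
    {G : Set (ℝ × EuclideanSpace ℝ (Fin d))} (hG : hMeasure (parabolicDist H) d G = 0) :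
    ∀ᵐ ω ∂P, volume ((fun y => X y.1 ω + y.2) '' G) = 0 := by
  obtain ⟨A, hA, hball⟩ :=
    exists_lintegral_volume_image_parabolicBall_le hX hcont hH hdp hHp
  refine ae_measure_image_eq_zero_of_hMeasure_eq_zero hA (fun c r hr => ?_) hG
  obtain ⟨Y, hYm, hY, hYint⟩ := hball c r hr
  refine ⟨Y, hYm, hY, hYint.trans ?_⟩
  rw [← ENNReal.ofReal_pow hr.le, Real.rpow_natCast]
  gcongr
  linarith

end KolmogorovProcess

theorem IsFBM.ae_volume_image_add_eq_zero {Ω : Type*} [MeasurableSpace Ω] {ℙ : Measure Ω}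
    [IsFiniteMeasure ℙ] {H : ℝ} {d : ℕ} {B : Ω → ℝ → EuclideanSpace ℝ (Fin d)}
    (hB : IsFBM ℙ H d B) (hH : 0 < H) {f : ℝ → EuclideanSpace ℝ (Fin d)} {E : Set ℝ}
    (hE : E ⊆ Icc 0 1) (hG : hMeasure (parabolicDist H) d ((fun t => (t, f t)) '' E) = 0) :
    ∀ᵐ ω ∂ℙ, volume ((fun t => B ω t + f t) '' E) = 0 := by
  let p : ℝ := max d (3 / H)
  have hp : 3 / H ≤ p := le_max_right _ _
  have hHp : 2 < H * p := by linarith [(div_le_iff₀' hH).1 hp]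
  obtain ⟨M, hX⟩ := hB.isKolmogorovProcess_clampedProcess hH ((div_pos three_pos hH).trans_le hp)
  filter_upwards [ae_volume_image_eq_zero_of_hMeasure_eq_zero hX hB.continuous_clampedProcess hH
    (le_max_left _ _) hHp hG] with ω hω
  rwa [image_image, image_clampedProcess_add B f hE] at hω

theorem statement16_general {Ω : Type*} [MeasurableSpace Ω] {ℙ : Measure Ω}
    [IsProbabilityMeasure ℙ] {H : ℝ} (hH : 0 < H) {d : ℕ} (hd : 0 < d)
    {B : Ω → ℝ → EuclideanSpace ℝ (Fin d)} (hB : IsFBM ℙ H d B) {f : ℝ → EuclideanSpace ℝ (Fin d)}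
    (hf : Measurable f) {E : Set ℝ} (hE : E ⊆ Icc 0 1) :
    (0 < capacity (parabolicDist H) d ((fun t => (t, f t)) '' E) →
      ∀ᵐ ω ∂ℙ, 0 < volume ((fun t => B ω t + f t) '' E)) ∧
    (hMeasure (parabolicDist H) d ((fun t => (t, f t)) '' E) = 0 →
      ∀ᵐ ω ∂ℙ, volume ((fun t => B ω t + f t) '' E) = 0) :=
  ⟨hB.ae_volume_image_add_pos hH hd hf hE, hB.ae_volume_image_add_eq_zero hH hE⟩

/-- Corollary 5.3: for a bounded Borel measurable drift `f` and a
Borel set `E ⊆ I`: (i) if `C^d_{ρ_H}(Gr_E(f)) > 0` then `λ_d((B^H+f)(E)) > 0` with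
positive probability; (ii) if `ℋ^d_{ρ_H}(Gr_E(f)) = 0` then `λ_d((B^H+f)(E)) = 0` a.s. -/
theorem statement16 {Ω : Type*} [MeasurableSpace Ω] (ℙ : Measure Ω) [IsProbabilityMeasure ℙ]
    (H : ℝ) (hH : H ∈ Set.Ioo (0 : ℝ) 1) (d : ℕ) (hd : 0 < d)
    (B : Ω → ℝ → EuclideanSpace ℝ (Fin d)) (hB : IsFBM ℙ H d B)
    (a b : ℝ) (ha : 0 < a) (hab : a < b) (hb : b ≤ 1)
    (f : ℝ → EuclideanSpace ℝ (Fin d)) (hfm : Measurable f)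
    (hfb : ∃ M₀ : ℝ, ∀ t ∈ Set.Icc (0 : ℝ) 1, ‖f t‖ ≤ M₀)
    (E : Set ℝ) (hE : MeasurableSet E) (hEI : E ⊆ Set.Icc a b) :
    (0 < capacity (parabolicDist H) d ((fun t => (t, f t)) '' E) →
      0 < ℙ {ω | 0 < volume ((fun t => B ω t + f t) '' E)}) ∧
    (hMeasure (parabolicDist H) d ((fun t => (t, f t)) '' E) = 0 →
      ℙ {ω | volume ((fun t => B ω t + f t) '' E) = 0} = 1) := by
  have hE01 : E ⊆ Icc 0 1 := hEI.trans (Icc_subset_Icc ha.le hb)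
  obtain ⟨hpos, hzero⟩ := statement16_general hH.1 hd hB hfm hE01
  exact ⟨fun h => pos_iff_ne_zero.2 (frequently_ae_iff.1 (hpos h).frequently),
    fun h => (measure_congr (eventuallyEq_univ.2 (hzero h))).trans measure_univ⟩
end
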